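/- arXiv:2103.07650 — 4 statements merged into one kernel-verified Lean document; each statement's English description precedes it below -/
import Mathlib

section
/- Let n ≥ 2, 1 < p̄ < ∞, and let k be an integer with k ≥ 2p̄′, where p̄′ = p̄/(p̄−1). Let r₀ > 0, T > 1, ε > 0, and let (f, g) ∈ (C_c^∞(ℝⁿ))². Let w be a C² function on [0,T) × ℝⁿ with w(0,·) = εf, ∂_t w(0,·) = εg, supported in {(t,x) : |x| ≤ t + r₀}, satisfying ∂_t²w − Δw ≥ H pointwise for a continuous function H ≥ the stated inequality sense with H ∈ L¹((0,T) × ℝⁿ). Then there exists a constant C > 0, depending only on n, k, r₀, p̄ and η (not on R, T, ε, w), such that for all R with 1 ≤ R < T: ε ∫_{ℝⁿ} g(x) dx + ∫_0^T ∫_{ℝⁿ} H ψ_R dx dt ≤ C R^{−2} ∫_0^T ∫_{ℝⁿ} |w| [ψ_R*]^{1/p̄} dx dt. -/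
/-!
The function `w` is tested against the cutoff `ψ(t) = η(t / R) ^ k`, which depends on time only.
By finite propagation, `w` and its derivatives vanish at positive times for `‖x‖ > t + r₀`, so
everything is integrable over the slab `(0, T) × ℝⁿ` (`slab_integrable`) and the Laplacian
integrates to zero on each time slice (`integral_dxD_mul`). Two integrations by parts in time
(`integral_dtD_dtD_mul`) move `∂_t²` onto `ψ`; since `ψ = 1` near `t = 0` and `ψ, ψ'` vanish at
`t = T > R`, the only boundary term is `-∫ ∂_t w(0, x) dx = -ε ∫ g`. Hence
`ε ∫ g + ∫∫ H ψ ≤ ∫∫ w ψ''`.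

It remains to see that `|ψ''| ≤ C R⁻² (ψ*) ^ (1 / p̄)` (`cut_bound`). The second derivative of
`η ^ k` is `η ^ (k - 2)` times a continuous function and vanishes for `s < 1 / 2`; the assumption
`k ≥ 2 p̄'` means `k / p̄ ≤ k - 2`, so `η ^ (k - 2) ≤ η ^ (k / p̄)` because `0 ≤ η ≤ 1`.
-/


open MeasureTheory Real ENNReal FourierTransform
open scoped ContDiff

noncomputable section

/-- Euclidean space ℝⁿ. -/
abbrev Spc (n : ℕ) := EuclideanSpace ℝ (Fin n)

/-- Space-time ℝ × ℝⁿ. -/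
abbrev STn (n : ℕ) := ℝ × Spc n

variable {n : ℕ}

/-- Directional derivative in the space-time direction `v`. -/
def dirD (v : STn n) (f : STn n → ℝ) : STn n → ℝ := fun p => fderiv ℝ f p v

/-- Time derivative ∂_t. -/
def dtD : (STn n → ℝ) → STn n → ℝ := dirD (1, 0)

/-- Spatial derivative ∂_j. -/
def dxD (j : Fin n) : (STn n → ℝ) → STn n → ℝ := dirD (0, EuclideanSpace.single j 1)

/-- Spatial Laplacian. -/
def lapD (f : STn n → ℝ) : STn n → ℝ := fun p => ∑ j, dxD j (dxD j f) p

/-- d'Alembertian □ = ∂_t² − Δ. -/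
def boxD (f : STn n → ℝ) : STn n → ℝ := fun p => dtD (dtD f) p - lapD f p

/-- Lorentz boost L_j = t ∂_j + x_j ∂_t. -/
def LD (j : Fin n) (f : STn n → ℝ) : STn n → ℝ := fun p => p.1 * dxD j f p + p.2 j * dtD f p

/-- Rotation Ω_{jk} = x_j ∂_k − x_k ∂_j. -/
def RotD (j k : Fin n) (f : STn n → ℝ) : STn n → ℝ := fun p => p.2 j * dxD k f p - p.2 k * dxD j f p

/-- Scaling S = t ∂_t + x·∇. -/
def SD (f : STn n → ℝ) : STn n → ℝ := fun p => p.1 * dtD f p + ∑ j, p.2 j * dxD j f p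

/-- Index type for the Klainerman vector fields. -/
def GIdx (n : ℕ) := Option (Fin n) ⊕ Fin n ⊕ (Fin n × Fin n) ⊕ Unit

instance : Fintype (GIdx n) := by unfold GIdx; infer_instance
instance : DecidableEq (GIdx n) := by unfold GIdx; infer_instance

/-- The Klainerman vector field with index `i`. -/
def Gop : GIdx n → (STn n → ℝ) → STn n → ℝ
  | Sum.inl none => dtD
  | Sum.inl (some j) => dxD j
  | Sum.inr (Sum.inl j) => LD j
  | Sum.inr (Sum.inr (Sum.inl jk)) => RotD jk.1 jk.2
  | Sum.inr (Sum.inr (Sum.inr _)) => SD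

/-- Iterated composition Γ^α along a word of indices. -/
def GwL : List (GIdx n) → (STn n → ℝ) → STn n → ℝ
  | [], f => f
  | a :: l, f => Gop a (GwL l f)

/-- Sum of a quantity over all products of at most `N` Klainerman vector fields. -/
def SumW (N : ℕ) (Φ : (STn n → ℝ) → ℝ≥0∞) (f : STn n → ℝ) : ℝ≥0∞ :=
  ∑ m ∈ Finset.range (N + 1), ∑ w : Fin m → GIdx n, Φ (GwL (List.ofFn w) f)

/-- Pointwise norm of the full space-time gradient ∂u = (∂_t u, ∇_x u). -/
def gradN (f : STn n → ℝ) (p : STn n) : ℝ := Real.sqrt ((dtD f p) ^ 2 + ∑ j, (dxD j f p) ^ 2)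

/-- Fourier transform (in space) of a real valued function. -/
def fourierS (g : Spc n → ℝ) : Spc n → ℂ := 𝓕 (fun x => (g x : ℂ))

/-- ‖ |D|^s g ‖_{L²}, i.e. the L² norm of ξ ↦ |ξ|^s (ℱ g)(ξ). -/
def DsN (s : ℝ) (g : Spc n → ℝ) : ℝ≥0∞ :=
  eLpNorm (fun ξ : Spc n => ‖ξ‖ ^ s * ‖fourierS g ξ‖) 2 volume

/-- The surface measure on the unit sphere of ℝⁿ. -/
def sphM (n : ℕ) : Measure (Metric.sphere (0 : Spc n) 1) := (volume : Measure (Spc n)).toSphere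

/-- The L^q norm of g(r ω) over the unit sphere. -/
def sphN (n : ℕ) (q : ℝ) (g : Spc n → ℝ) (r : ℝ) : ℝ≥0∞ :=
  (∫⁻ o, (‖g (r • (o : Spc n))‖₊ : ℝ≥0∞) ^ q ∂(sphM n)) ^ (1 / q)

/-- The mixed norm ‖g‖_{p,q} = (∫_0^∞ ‖g(r·)‖_{L^q(S^{n-1})}^p r^{n-1} dr)^{1/p}. -/
def mixN (n : ℕ) (p q : ℝ) (g : Spc n → ℝ) : ℝ≥0∞ :=
  (∫⁻ r in Set.Ioi (0 : ℝ), (sphN n q g r) ^ p * ENNReal.ofReal (r ^ (n - 1))) ^ (1 / p)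

/-- A space-time function which is Schwartz in the space variable for each fixed time. -/
def SchwartzInX (v : STn n → ℝ) : Prop :=
  ∀ t : ℝ, ∃ φ : SchwartzMap (Spc n) ℝ, ∀ x, v (t, x) = φ x

/-- The space-time partial derivatives ∂_0 = ∂_t, ∂_j (j = 1,2,3) on ℝ × ℝ³. -/
def pd4 (α : Fin 4) : (STn 3 → ℝ) → STn 3 → ℝ := Fin.cases dtD (fun j => dxD j) α

/-- The null condition for a set of coefficients {A^{αβ}}. -/
def NullCond (A : Fin 4 → Fin 4 → ℝ) : Prop :=
  ∀ X : Fin 4 → ℝ, (X 0) ^ 2 = (X 1) ^ 2 + (X 2) ^ 2 + (X 3) ^ 2 →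
    ∑ α, ∑ β, A α β * X α * X β = 0

/-- The null form A^{αβ} (∂_α v)(∂_β w). -/
def QF (A : Fin 4 → Fin 4 → ℝ) (v w : STn 3 → ℝ) (p : STn 3) : ℝ :=
  ∑ α, ∑ β, A α β * pd4 α v p * pd4 β w p

/-- The good derivative T_j = ∂_j + (x_j/|x|) ∂_t. -/
def TD (j : Fin 3) (f : STn 3 → ℝ) (p : STn 3) : ℝ := dxD j f p + (p.2 j / ‖p.2‖) * dtD f p

end


/-! ### Integration over the slab -/

open Set in
/-- A continuous function whose restriction to each time slice in `(0, T)` is supported in a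
fixed ball is integrable over the slab `(0, T) × ℝⁿ`. -/
lemma slab_integrable {n : ℕ} {T M : ℝ} {F : STn n → ℝ} (hF : Continuous F)
    (h0 : ∀ z : STn n, 0 < z.1 → z.1 < T → M < ‖z.2‖ → F z = 0) :
    IntegrableOn F (Ioo 0 T ×ˢ (univ : Set (Spc n))) volume := by
  have hK : IntegrableOn F (Icc 0 T ×ˢ Metric.closedBall (0 : Spc n) M) volume :=
    hF.continuousOn.integrableOn_compact (isCompact_Icc.prod (isCompact_closedBall _ _))
  have hK2 : IntegrableOn F ((Icc 0 T ×ˢ Metric.closedBall (0 : Spc n) M) ∩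
    (Ioo 0 T ×ˢ (univ : Set (Spc n)))) volume := hK.mono_set inter_subset_left
  refine hK2.of_forall_sdiff_eq_zero (measurableSet_Ioo.prod MeasurableSet.univ) ?_
  rintro ⟨t, x⟩ ⟨h1, h2⟩
  have ht : t ∈ Ioo 0 T := h1.1
  refine h0 _ ht.1 ht.2 ?_
  by_contra hle
  exact h2 ⟨⟨⟨ht.1.le, ht.2.le⟩, by simpa using hle⟩, h1⟩

lemma dirD_contDiff {n : ℕ} {w : STn n → ℝ} {m m' : WithTop ℕ∞} (hw : ContDiff ℝ m w)
    (hm : m' + 1 ≤ m) (v : STn n) : ContDiff ℝ m' (dirD v w) :=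
  (hw.fderiv_right hm).clm_apply contDiff_const

lemma dirD_eq_zero {n : ℕ} {w : STn n → ℝ} {U : Set (STn n)} (hU : IsOpen U)
    (hw : ∀ z ∈ U, w z = 0) (v : STn n) : ∀ z ∈ U, dirD v w z = 0 := by
  intro z hz
  have h : w =ᶠ[nhds z] fun _ => (0 : ℝ) := by
    filter_upwards [hU.mem_nhds hz] with y hy using hw y hy
  simp [dirD, h.fderiv_eq]

/-- The set outside the light cone, at positive times. -/
def outerCone (n : ℕ) (r₀ : ℝ) : Set (STn n) := {z | 0 < z.1 ∧ z.1 + r₀ < ‖z.2‖}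

lemma isOpen_outerCone (n : ℕ) (r₀ : ℝ) : IsOpen (outerCone n r₀) :=
  (isOpen_lt continuous_const continuous_fst).inter
    (isOpen_lt (continuous_fst.add continuous_const) continuous_snd.norm)

/-- The time derivative along the line `t ↦ (t, x)`. -/
lemma hasDerivAt_slice {n : ℕ} {u : STn n → ℝ} (hu : Differentiable ℝ u) (x : Spc n) (t : ℝ) :
    HasDerivAt (fun s => u (s, x)) (dtD u (t, x)) t := by
  have h : HasDerivAt (fun s : ℝ => ((s, x) : STn n)) (1, 0) t :=
    (hasDerivAt_id t).prodMk (hasDerivAt_const t x)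
  exact (hu (t, x)).hasFDerivAt.comp_hasDerivAt t h

open Set in
/-- The integral of a pure spatial derivative `∂_j u` against a function of time vanishes. -/
lemma integral_dxD_mul {n : ℕ} {T r₀ : ℝ} {u : STn n → ℝ} (hu : ContDiff ℝ 1 u)
    (h0 : ∀ z ∈ outerCone n r₀, u z = 0) {ψ : ℝ → ℝ} (hψ : Continuous ψ) (j : Fin n) :
    ∫ z in Ioo 0 T ×ˢ (univ : Set (Spc n)), dxD j u z * ψ z.1 = 0 := by
  have hdu : Continuous (dxD j u) := (dirD_contDiff hu (m' := 0) (by norm_num) _).continuous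
  have hd0 : ∀ z ∈ outerCone n r₀, dxD j u z = 0 := dirD_eq_zero (isOpen_outerCone n r₀) h0 _
  have hint : IntegrableOn (fun z : STn n => dxD j u z * ψ z.1)
      (Ioo 0 T ×ˢ (univ : Set (Spc n))) volume := by
    refine slab_integrable (M := T + r₀) (hdu.mul (hψ.comp continuous_fst)) ?_
    intro z h1 h2 h3
    rw [hd0 z ⟨h1, by linarith⟩, zero_mul]
  rw [Measure.volume_eq_prod] at hint ⊢
  rw [setIntegral_prod _ hint]
  refine setIntegral_eq_zero_of_forall_eq_zero ?_
  intro t ht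
  rw [Measure.restrict_univ]
  simp only
  rw [integral_mul_const]
  have hdiff : Differentiable ℝ u := hu.differentiable (by norm_num)
  have hfd : ∀ x : Spc n, HasFDerivAt (fun y : Spc n => u (t, y))
      ((fderiv ℝ u (t, x)).comp (ContinuousLinearMap.inr ℝ ℝ (Spc n))) x := fun x =>
    (hdiff (t, x)).hasFDerivAt.comp x (hasFDerivAt_prodMk_right t x)
  have hfd' : ∀ x : Spc n, fderiv ℝ (fun y : Spc n => u (t, y)) x (EuclideanSpace.single j 1)
      = dxD j u (t, x) := by
    intro x
    rw [(hfd x).fderiv]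
    rfl
  have hcs : ∀ {v : STn n → ℝ}, Continuous v → (∀ z ∈ outerCone n r₀, v z = 0) →
      Integrable (fun x : Spc n => v (t, x)) := by
    intro v hv hv0
    refine (hv.comp (Continuous.prodMk_right t)).integrable_of_hasCompactSupport ?_
    refine HasCompactSupport.of_support_subset_isCompact
      (isCompact_closedBall (0 : Spc n) (t + r₀)) ?_
    intro x hx
    by_contra hxn
    exact hx (hv0 (t, x) ⟨ht.1, by simpa using hxn⟩)
  have key := integral_mul_fderiv_eq_neg_fderiv_mul_of_integrable (μ := (volume : Measure (Spc n)))
    (𝕜 := ℝ) (f := fun _ : Spc n => (1 : ℝ)) (g := fun y : Spc n => u (t, y))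
    (v := EuclideanSpace.single j 1) (by simp)
    (by simpa [hfd'] using hcs hdu hd0) (by simpa using hcs hu.continuous h0)
    (fun x _ => by fun_prop) (fun x _ => (hfd x).differentiableAt)
  simp only [hfd', one_mul] at key
  rw [key]
  simp

open Set in
/-- Integration by parts in time against a cutoff `ψ` with `ψ(0) = 1`, `ψ'(0) = 0` and
`ψ(T) = ψ'(T) = 0`; here `ψ1`, `ψ2` are the first two derivatives of `ψ`. -/
lemma integral_dtD_dtD_mul {n : ℕ} {T r₀ : ℝ} (hT : 0 < T) {w : STn n → ℝ} (hw : ContDiff ℝ 2 w)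
    (h0 : ∀ z ∈ outerCone n r₀, w z = 0) {ψ ψ1 ψ2 : ℝ → ℝ}
    (h1 : ∀ t, HasDerivAt ψ (ψ1 t) t) (h2 : ∀ t, HasDerivAt ψ1 (ψ2 t) t) (h2c : Continuous ψ2)
    (e0 : ψ 0 = 1) (e0' : ψ1 0 = 0) (eT : ψ T = 0) (eT' : ψ1 T = 0) :
    ∫ z in Ioo 0 T ×ˢ (univ : Set (Spc n)), (dtD (dtD w) z * ψ z.1 - w z * ψ2 z.1) =
      - ∫ x, dtD w (0, x) := by
  have hψc : Continuous ψ := continuous_iff_continuousAt.2 fun t => (h1 t).continuousAt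
  have hw1 : ContDiff ℝ 1 (dtD w) := dirD_contDiff hw (by norm_num) _
  have hw2 : Continuous (dtD (dtD w)) := (dirD_contDiff hw1 (m' := 0) (by norm_num) _).continuous
  have hd0 : ∀ z ∈ outerCone n r₀, dtD (dtD w) z = 0 :=
    dirD_eq_zero (isOpen_outerCone n r₀) (dirD_eq_zero (isOpen_outerCone n r₀) h0 _) _
  have hcont : Continuous fun z : STn n => dtD (dtD w) z * ψ z.1 - w z * ψ2 z.1 :=
    (hw2.mul (hψc.comp continuous_fst)).sub (hw.continuous.mul (h2c.comp continuous_fst))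
  have hint : IntegrableOn (fun z : STn n => dtD (dtD w) z * ψ z.1 - w z * ψ2 z.1)
      (Ioo 0 T ×ˢ (univ : Set (Spc n))) volume := by
    refine slab_integrable (M := T + r₀) hcont ?_
    intro z g1 g2 g3
    have hz : z ∈ outerCone n r₀ := ⟨g1, by linarith⟩
    rw [hd0 z hz, h0 z hz]
    ring
  rw [Measure.volume_eq_prod] at hint ⊢
  rw [← Measure.prod_restrict, Measure.restrict_univ]
  rw [IntegrableOn, ← Measure.prod_restrict, Measure.restrict_univ] at hint
  rw [integral_prod_symm _ hint, ← integral_neg]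
  congr 1
  ext x
  rw [← integral_Ioc_eq_integral_Ioo, ← intervalIntegral.integral_of_le hT.le]
  have hderiv : ∀ t, HasDerivAt (fun t => dtD w (t, x) * ψ t - w (t, x) * ψ1 t)
      (dtD (dtD w) (t, x) * ψ t - w (t, x) * ψ2 t) t := by
    intro t
    have a := (hasDerivAt_slice (hw1.differentiable (by norm_num)) x t).mul (h1 t)
    have b := (hasDerivAt_slice (hw.differentiable (by norm_num)) x t).mul (h2 t)
    exact (a.sub b).congr_deriv (by ring)
  rw [intervalIntegral.integral_eq_sub_of_hasDerivAt (fun t _ => hderiv t)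
    ((hcont.comp (Continuous.prodMk_left x)).intervalIntegrable _ _)]
  simp [e0, e0', eT, eT']

/-! ### Derivatives of the cutoff -/

/-- The second derivative of `η ^ (m + 2)` divided by the factor `η ^ m`. -/
noncomputable def cutFactor (m : ℕ) (η : ℝ → ℝ) (s : ℝ) : ℝ :=
  (m + 2) * ((m + 1) * deriv η s ^ 2 + η s * deriv (deriv η) s)

lemma hasDerivAt_cut {η : ℝ → ℝ} (hη : ContDiff ℝ ∞ η) (m : ℕ) (R t : ℝ) :
    HasDerivAt (fun t => η (t / R) ^ (m + 2))
      ((m + 2) * η (t / R) ^ (m + 1) * deriv η (t / R) / R) t := by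
  have hd : HasDerivAt η (deriv η (t / R)) (t / R) :=
    ((hη.differentiable (by simp)) _).hasDerivAt
  have hi : HasDerivAt (fun t => t / R) (1 / R) t := (hasDerivAt_id t).div_const R
  refine ((hd.comp t hi).pow (m + 2)).congr_deriv ?_
  push_cast
  simp only [Function.comp_apply]
  ring

lemma hasDerivAt_cut' {η : ℝ → ℝ} (hη : ContDiff ℝ ∞ η) (m : ℕ) (R t : ℝ) :
    HasDerivAt (fun t => (m + 2) * η (t / R) ^ (m + 1) * deriv η (t / R) / R)
      (η (t / R) ^ m * cutFactor m η (t / R) / R ^ 2) t := by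
  have hd : HasDerivAt η (deriv η (t / R)) (t / R) :=
    ((hη.differentiable (by simp)) _).hasDerivAt
  have hη' : ContDiff ℝ ∞ (deriv η) := (contDiff_infty_iff_deriv.1 hη).2
  have hd' : HasDerivAt (deriv η) (deriv (deriv η) (t / R)) (t / R) :=
    ((hη'.differentiable (by simp)) _).hasDerivAt
  have hi : HasDerivAt (fun t => t / R) (1 / R) t := (hasDerivAt_id t).div_const R
  refine (((((hd.comp t hi).pow (m + 1)).const_mul ((m : ℝ) + 2)).mul
    (hd'.comp t hi)).div_const R).congr_deriv ?_
  push_cast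
  simp only [Function.comp_apply, cutFactor, Pi.pow_apply]
  ring

lemma continuous_cutFactor {η : ℝ → ℝ} (hη : ContDiff ℝ ∞ η) (m : ℕ) :
    Continuous (cutFactor m η) := by
  have hη' : ContDiff ℝ ∞ (deriv η) := (contDiff_infty_iff_deriv.1 hη).2
  have hη'' : ContDiff ℝ ∞ (deriv (deriv η)) := (contDiff_infty_iff_deriv.1 hη').2
  have := hη.continuous
  have := hη'.continuous
  have := hη''.continuous
  unfold cutFactor
  fun_prop

open Set in
/-- Pointwise control of `(η ^ k)''` by the truncated power `(η*) ^ (k / p)`: the hypothesis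
`(m + 2) / p ≤ m` is the condition `k ≥ 2 p'` for `k = m + 2`, and `0 ≤ η ≤ 1`. -/
lemma cut_bound {η : ℝ → ℝ} (hη : ContDiff ℝ ∞ η) {m : ℕ} (hm : 1 ≤ m) {p : ℝ}
    (hmp : ((m + 2 : ℕ) : ℝ) * (1 / p) ≤ m)
    (h01 : ∀ s, 0 ≤ η s ∧ η s ≤ 1) (hη1 : ∀ s : ℝ, s ≤ 1 / 2 → η s = 1)
    (hη0 : ∀ s : ℝ, 1 ≤ s → η s = 0) :
    ∃ C > (0 : ℝ), ∀ s : ℝ, |η s ^ m * cutFactor m η s| ≤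
      C * (((if s < 1 / 2 then 0 else η s) ^ (m + 2)) ^ (1 / p)) := by
  obtain ⟨K, hK⟩ := (isCompact_Icc (a := (1 / 2 : ℝ)) (b := 1)).exists_bound_of_continuousOn
    (continuous_cutFactor hη m).continuousOn
  refine ⟨|K| + 1, by positivity, fun s => ?_⟩
  by_cases hs : s < 1 / 2
  · have hev : η =ᶠ[nhds s] fun _ => (1 : ℝ) := by
      filter_upwards [Iio_mem_nhds hs] with y hy using hη1 y (le_of_lt hy)
    have e1 : deriv η s = 0 := by rw [hev.deriv_eq]; simp
    have e2 : deriv (deriv η) s = 0 := by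
      rw [hev.deriv.deriv_eq]; simp
    have : cutFactor m η s = 0 := by simp [cutFactor, e1, e2]
    rw [this, mul_zero, abs_zero, if_pos hs]
    positivity
  rw [if_neg hs]
  obtain ⟨h0, h1⟩ := h01 s
  rcases h0.eq_or_lt with h0' | h0'
  · rw [← h0', zero_pow (by omega), zero_mul, abs_zero]
    positivity
  have hs1 : s < 1 := by
    by_contra h
    exact h0'.ne' (hη0 s (not_lt.1 h))
  have hKs := hK s ⟨not_lt.1 hs, hs1.le⟩
  rw [Real.norm_eq_abs] at hKs
  have hpow : η s ^ m ≤ (η s ^ (m + 2)) ^ (1 / p) := by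
    rw [← Real.rpow_natCast (η s) (m + 2), ← Real.rpow_mul h0, ← Real.rpow_natCast (η s) m]
    exact Real.rpow_le_rpow_of_exponent_ge h0' h1 hmp
  rw [abs_mul, abs_of_nonneg (pow_nonneg h0 m), mul_comm]
  exact mul_le_mul (by linarith [le_abs_self K]) hpow (by positivity) (by positivity)

/-! ### The test-function inequality -/

/-- The test-function lemma of Ikeda–Sobajima–Wakasa (Lemma 2.2). -/
theorem test_function_lemma (n : ℕ) (hn : 2 ≤ n) (pbar : ℝ) (hpbar : 1 < pbar)
    (k : ℕ) (hk : 2 * (pbar / (pbar - 1)) ≤ (k : ℝ))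
    (r₀ : ℝ) (hr₀ : 0 < r₀)
    (η : ℝ → ℝ) (hηsm : ContDiff ℝ ∞ η) (hmono : AntitoneOn η (Set.Ici 0))
    (hη1 : ∀ s : ℝ, s ≤ 1/2 → η s = 1) (hη0 : ∀ s : ℝ, 1 ≤ s → η s = 0)
    (hstrict : StrictAntiOn η (Set.Ioo (1/2 : ℝ) 1)) :
    ∃ C > (0 : ℝ), ∀ T ε : ℝ, 1 < T → 0 < ε →
      ∀ f g : Spc n → ℝ, ContDiff ℝ ∞ f → HasCompactSupport f →
        ContDiff ℝ ∞ g → HasCompactSupport g →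
      ∀ w H : STn n → ℝ, ContDiff ℝ 2 w → Continuous H →
        IntegrableOn H (Set.Ioo 0 T ×ˢ (Set.univ : Set (Spc n))) volume →
        (∀ x, w (0, x) = ε * f x) → (∀ x, dtD w (0, x) = ε * g x) →
        (∀ z : STn n, 0 ≤ z.1 → z.1 + r₀ < ‖z.2‖ → w z = 0) →
        (∀ z : STn n, 0 < z.1 → z.1 < T → H z ≤ boxD w z) →
        ∀ R : ℝ, 1 ≤ R → R < T →
          ε * (∫ x, g x) +
              ∫ z in Set.Ioo 0 T ×ˢ (Set.univ : Set (Spc n)), H z * (η (z.1 / R)) ^ k ≤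
            C * R ^ (-2 : ℝ) *
              ∫ z in Set.Ioo 0 T ×ˢ (Set.univ : Set (Spc n)),
                |w z| * (((if z.1 / R < 1/2 then 0 else η (z.1 / R)) ^ k) ^ (1 / pbar)) := by
  have hpm : 0 < pbar - 1 := by linarith
  have hp0 : 0 < pbar := by linarith
  have hk2 : (2 : ℝ) < k := by
    refine lt_of_lt_of_le ?_ hk
    have : 1 < pbar / (pbar - 1) := by rw [lt_div_iff₀ hpm]; linarith
    linarith
  obtain ⟨m, rfl⟩ : ∃ m, k = m + 2 :=
    ⟨k - 2, by have : 2 < k := by exact_mod_cast hk2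
               omega⟩
  -- `k > 2` strictly, since the conjugate exponent exceeds `1`; so `η ^ m` vanishes with `η`.
  have hm : 1 ≤ m := by
    have : 2 < m + 2 := by exact_mod_cast hk2
    omega
  have hmp : ((m + 2 : ℕ) : ℝ) * (1 / pbar) ≤ m := by
    have h2 : 2 * pbar ≤ ((m + 2 : ℕ) : ℝ) * (pbar - 1) := by
      rw [← div_le_iff₀ hpm]
      calc _ = _ := by ring
        _ ≤ _ := hk
    rw [mul_one_div, div_le_iff₀ hp0]
    push_cast at h2 ⊢
    linarith
  have h01 : ∀ s, 0 ≤ η s ∧ η s ≤ 1 := by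
    intro s
    rcases le_total s (1 / 2) with h | h
    · rw [hη1 s h]; norm_num
    · have hs0 : s ∈ Set.Ici (0 : ℝ) := by simp only [Set.mem_Ici]; linarith
      constructor
      · rcases le_total s 1 with h' | h'
        · rw [← hη0 1 le_rfl]
          exact hmono hs0 (by simp) h'
        · rw [hη0 s h']
      · rw [← hη1 (1 / 2) le_rfl]
        exact hmono (by simp) hs0 h
  obtain ⟨C, hC, hbound⟩ := cut_bound hηsm hm hmp h01 hη1 hη0
  refine ⟨C, hC, ?_⟩
  intro T ε hT hε f g hf hfc hg hgc w H hw hH hHi hw0 hwt hsupp hbox R hR hRT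
  have hR0 : 0 < R := by linarith
  have hT0 : 0 < T := by linarith
  set S : Set (STn n) := Set.Ioo 0 T ×ˢ (Set.univ : Set (Spc n)) with hS
  have hSm : MeasurableSet S := measurableSet_Ioo.prod MeasurableSet.univ
  set ψ : ℝ → ℝ := fun t => η (t / R) ^ (m + 2) with hψ
  set ψ2 : ℝ → ℝ := fun t => η (t / R) ^ m * cutFactor m η (t / R) / R ^ 2 with hψ2
  set χ : ℝ → ℝ := fun t =>
    ((if t / R < 1 / 2 then 0 else η (t / R)) ^ (m + 2)) ^ (1 / pbar) with hχ
  have hηc : Continuous η := hηsm.continuous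
  have hψc : Continuous ψ := by fun_prop
  have hψ2c : Continuous ψ2 := by
    have := continuous_cutFactor hηsm m
    fun_prop
  have hout : ∀ z ∈ outerCone n r₀, w z = 0 := fun z hz => hsupp z hz.1.le hz.2
  have hou := isOpen_outerCone n r₀
  have hTR : 1 ≤ T / R := by rw [le_div_iff₀ hR0]; linarith
  have hη'0 : deriv η 0 = 0 := by
    have hev : η =ᶠ[nhds 0] fun _ => (1 : ℝ) := by
      filter_upwards [Iio_mem_nhds (show (0 : ℝ) < 1 / 2 by norm_num)] with y hy
        using hη1 y (le_of_lt hy)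
    rw [hev.deriv_eq]; simp
  have htime := integral_dtD_dtD_mul (n := n) (r₀ := r₀) hT0 hw hout
    (hasDerivAt_cut hηsm m R) (hasDerivAt_cut' hηsm m R) hψ2c
    (by simp [hη1]) (by simp [hη'0]) (by simp [hη0 _ hTR]) (by simp [hη0 _ hTR])
  have hw1 : ∀ v, ContDiff ℝ 1 (dirD v w) := fun v => dirD_contDiff hw (by norm_num) v
  have hw2 : ∀ v, Continuous (dirD v (dirD v w)) := fun v =>
    (dirD_contDiff (hw1 v) (m' := 0) (by norm_num) v).continuous
  have hd1 : ∀ v, ∀ z ∈ outerCone n r₀, dirD v w z = 0 := fun v => dirD_eq_zero hou hout v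
  have hd2 : ∀ v, ∀ z ∈ outerCone n r₀, dirD v (dirD v w) z = 0 :=
    fun v => dirD_eq_zero hou (hd1 v) v
  have hint : ∀ {F : STn n → ℝ} {φ : ℝ → ℝ}, Continuous F → Continuous φ →
      (∀ z ∈ outerCone n r₀, F z = 0) → IntegrableOn (fun z => F z * φ z.1) S volume := by
    intro F φ hF hφ hF0
    refine slab_integrable (M := T + r₀) (hF.mul (hφ.comp continuous_fst)) ?_
    intro z g1 g2 g3
    rw [hF0 z ⟨g1, by linarith⟩, zero_mul]
  have itt : IntegrableOn (fun z => dtD (dtD w) z * ψ z.1) S volume := hint (hw2 _) hψc (hd2 _)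
  have iw2 : IntegrableOn (fun z => w z * ψ2 z.1) S volume := hint hw.continuous hψ2c hout
  have ixx : ∀ j, IntegrableOn (fun z => dxD j (dxD j w) z * ψ z.1) S volume :=
    fun j => hint (hw2 _) hψc (hd2 _)
  have ilap : IntegrableOn (fun z => lapD w z * ψ z.1) S volume := by
    simp only [lapD, Finset.sum_mul]
    exact integrable_finsetSum _ fun j _ => ixx j
  have hlap : ∫ z in S, lapD w z * ψ z.1 = 0 := by
    simp only [lapD, Finset.sum_mul]
    rw [integral_finsetSum _ fun j _ => ixx j]
    exact Finset.sum_eq_zero fun j _ => integral_dxD_mul (hw1 _) (hd1 _) hψc j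
  have ibox : IntegrableOn (fun z => boxD w z * ψ z.1) S volume := by
    simp only [boxD, sub_mul]
    exact itt.sub ilap
  have hboxe : ∫ z in S, boxD w z * ψ z.1 = ∫ z in S, dtD (dtD w) z * ψ z.1 := by
    simp only [boxD, sub_mul]
    rw [integral_sub itt ilap, hlap, sub_zero]
  have hψ01 : ∀ t, 0 ≤ ψ t ∧ ψ t ≤ 1 := fun t =>
    ⟨pow_nonneg (h01 _).1 _, pow_le_one₀ (h01 _).1 (h01 _).2⟩
  have iH : IntegrableOn (fun z => H z * ψ z.1) S volume := by
    refine Integrable.mono hHi (hH.mul (hψc.comp continuous_fst)).aestronglyMeasurable ?_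
    refine Filter.Eventually.of_forall fun z => ?_
    rw [norm_mul, Real.norm_eq_abs (ψ z.1), abs_of_nonneg (hψ01 _).1]
    exact mul_le_of_le_one_right (norm_nonneg _) (hψ01 _).2
  have step1 : ∫ z in S, H z * ψ z.1 ≤ ∫ z in S, boxD w z * ψ z.1 :=
    setIntegral_mono_on iH ibox hSm fun z hz =>
      mul_le_mul_of_nonneg_right (hbox z hz.1.1 hz.1.2) (hψ01 _).1
  have step2 : ε * (∫ x, g x) + ∫ z in S, dtD (dtD w) z * ψ z.1 = ∫ z in S, w z * ψ2 z.1 := by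
    rw [integral_sub itt iw2] at htime
    simp only [hwt] at htime
    rw [integral_const_mul] at htime
    linarith
  have hχ01 : ∀ t, 0 ≤ χ t ∧ χ t ≤ 1 := by
    intro t
    have h : 0 ≤ (if t / R < 1 / 2 then 0 else η (t / R)) ∧
        (if t / R < 1 / 2 then 0 else η (t / R)) ≤ 1 := by
      split_ifs
      · norm_num
      · exact h01 _
    exact ⟨Real.rpow_nonneg (pow_nonneg h.1 _) _,
      Real.rpow_le_one (pow_nonneg h.1 _) (pow_le_one₀ h.1 h.2) (by positivity)⟩
  have hχm : Measurable χ := by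
    have : Measurable fun t : ℝ => if t / R < 1 / 2 then (0 : ℝ) else η (t / R) :=
      Measurable.ite (measurableSet_lt (by fun_prop) measurable_const) measurable_const
        (hηc.measurable.comp (by fun_prop))
    exact (this.pow_const _).pow_const _
  have iabs : IntegrableOn (fun z => |w z|) S volume := by
    simpa using hint (F := fun z => |w z|) (φ := fun _ => 1) hw.continuous.abs continuous_const
      (fun z hz => by simp [hout z hz])
  have iχ : IntegrableOn (fun z => |w z| * χ z.1) S volume := by
    refine Integrable.mono iabs
      (hw.continuous.abs.measurable.mul (hχm.comp measurable_fst)).aestronglyMeasurable ?_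
    refine Filter.Eventually.of_forall fun z => ?_
    rw [norm_mul, Real.norm_eq_abs (χ z.1), abs_of_nonneg (hχ01 _).1]
    exact mul_le_of_le_one_right (norm_nonneg _) (hχ01 _).2
  have hRpow : R ^ (-2 : ℝ) = 1 / R ^ 2 := by
    rw [Real.rpow_neg hR0.le, one_div]
    norm_cast
  have step3 : ∫ z in S, w z * ψ2 z.1 ≤ C * R ^ (-2 : ℝ) * ∫ z in S, |w z| * χ z.1 := by
    rw [← integral_const_mul]
    refine setIntegral_mono_on iw2 (iχ.const_mul _) hSm fun z _ => ?_
    have hb : |ψ2 z.1| ≤ C * χ z.1 / R ^ 2 := by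
      simp only [hψ2]
      rw [abs_div, abs_of_pos (pow_pos hR0 2)]
      exact div_le_div_of_nonneg_right (hbound (z.1 / R)) (by positivity)
    calc w z * ψ2 z.1 ≤ |w z| * |ψ2 z.1| := by rw [← abs_mul]; exact le_abs_self _
      _ ≤ |w z| * (C * χ z.1 / R ^ 2) := mul_le_mul_of_nonneg_left hb (abs_nonneg _)
      _ = _ := by rw [hRpow]; ring
  calc ε * (∫ x, g x) + ∫ z in S, H z * ψ z.1
      ≤ ε * (∫ x, g x) + ∫ z in S, dtD (dtD w) z * ψ z.1 := by rw [← hboxe]; linarith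
    _ = ∫ z in S, w z * ψ2 z.1 := step2
    _ ≤ _ := step3
end

section
/- Let n ≥ 2, 1 < q̄ < ∞, and let k be an integer with k ≥ 2q̄′, where q̄′ = q̄/(q̄−1). Let r₀ > 0, T > 1, ε > 0, and let (f, g) ∈ (C_c^∞(ℝⁿ))² with ∫_{ℝⁿ} g(x) dx > 0. Let w be a C² function on [0,T) × ℝⁿ with w(0,·) = εf, ∂_t w(0,·) = εg, supported in {(t,x) : |x| ≤ t + r₀}, and satisfying ∂_t²w − Δw ≥ 0 pointwise. Then there exists a constant δ > 0, depending only on n, k, r₀, q̄ and η (not on R, T, ε, w), such that for all R with 1 ≤ R < T: δ [ε ∫_{ℝⁿ} g(x) dx]^{q̄} R^{n−(n−1)q̄/2} ≤ ∫_0^T ∫_{ℝⁿ} |∂_t w|^{q̄} ψ_R* dx dt. -/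
/-!
The quantity `X = ε ∫ g = ∫ ∂ₜw(0, x) dx` is propagated by testing `□w ≥ 0` against nonnegative
plane waves `B(t + e·x)`, `‖e‖ = 1`, where `B = 1` on `|s| < 2r₀`, a neighbourhood of the values
of `e·x` on the support of the data. Since plane waves solve the wave equation,
`∫ (∂ₜw · B - w · B') dx` is nondecreasing in `t`, hence at least `X` (`plane_wave_bound`).

For `R ≥ 30 r₀`, let `B` vanish for `|s| > 3r₀` and average over directions `e` and over times
`2R/3 ≤ t ≤ 3R/4`. Inside the support cone `‖x‖ ≤ t + r₀` the condition `|t + e·x| ≤ 3r₀` forces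
`x` into a layer of bounded width along the light cone and `e` into a set of measure
`O(R^{-(n-1)/2})` around `-x/t` (`direction_close`). The term with `w` is bounded by an integral
of `∂ₜw` over a time interval of bounded length (`enorm_le_lintegral_dt`). With `Q` the layer
`coneLayer` at times in `[R/2, 3R/4]` this gives `R^{(n+1)/2} X ≤ C ∫_Q |∂ₜw|`
(`averaged_bound`). For `1 ≤ R ≤ 30 r₀` the choice `B = 1` gives the same (`small_time_bound`).

As `Q` has volume `O(R^n)` (`volume_coneLayer_le`), Young's inequality turns this into the lower
bound `c X^q R^{n - (n-1)q/2}` for `∫_Q |∂ₜw|^q` (`Lq_of_L1`), and `ψ_R* ≥ η(3/4)^k > 0` on `Q`.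
-/

open MeasureTheory Real ENNReal FourierTransform
open scoped ContDiff

/-! ### Support and slices -/

lemma contDiff_dirD {n : ℕ} {m : WithTop ℕ∞} (v : STn n) {u : STn n → ℝ}
    (hu : ContDiff ℝ (m + 1) u) : ContDiff ℝ m (dirD v u) :=
  (hu.fderiv_right le_rfl).clm_apply contDiff_const

lemma dirD_eq_zero_s3 {n : ℕ} (v : STn n) {u : STn n → ℝ} {r : ℝ}
    (h : ∀ z : STn n, 0 < z.1 → z.1 + r < ‖z.2‖ → u z = 0) :
    ∀ z : STn n, 0 < z.1 → z.1 + r < ‖z.2‖ → dirD v u z = 0 := by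
  intro z h1 h2
  have hopen : IsOpen {y : STn n | 0 < y.1 ∧ y.1 + r < ‖y.2‖} :=
    (isOpen_lt continuous_const continuous_fst).inter
      (isOpen_lt (continuous_fst.add continuous_const) continuous_snd.norm)
  have hev : u =ᶠ[nhds z] fun _ => (0 : ℝ) := by
    filter_upwards [hopen.mem_nhds ⟨h1, h2⟩] with y hy using h y hy.1 hy.2
  simp [dirD, hev.fderiv_eq]

/-- Continuity carries the vanishing outside the light cone down to the initial time. -/
lemma eq_zero_of_continuous {n : ℕ} {u : STn n → ℝ} (hu : Continuous u) {r : ℝ}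
    (h : ∀ z : STn n, 0 < z.1 → z.1 + r < ‖z.2‖ → u z = 0) :
    ∀ z : STn n, 0 ≤ z.1 → z.1 + r < ‖z.2‖ → u z = 0 := by
  rintro ⟨t, x⟩ h1 h2
  simp only at h1 h2
  have hc : Filter.Tendsto (fun s : ℝ => u (s, x)) (nhdsWithin t (Set.Ioi t)) (nhds (u (t, x))) :=
    ((hu.comp (continuous_id.prodMk continuous_const)).tendsto t).mono_left nhdsWithin_le_nhds
  have hz : Filter.Tendsto (fun s : ℝ => u (s, x)) (nhdsWithin t (Set.Ioi t)) (nhds 0) := by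
    refine tendsto_const_nhds.congr' ?_
    have h3 : ∀ᶠ s in nhdsWithin t (Set.Ioi t), s < ‖x‖ - r :=
      nhdsWithin_le_nhds (Iio_mem_nhds (by linarith))
    filter_upwards [h3, self_mem_nhdsWithin] with s hs hs'
    exact (h (s, x) (lt_of_le_of_lt h1 hs') (by simp only; linarith)).symm
  exact tendsto_nhds_unique hc hz

lemma hasDerivAt_time {n : ℕ} {u : STn n → ℝ} (hu : Differentiable ℝ u) (t : ℝ) (x : Spc n) :
    HasDerivAt (fun s => u (s, x)) (dtD u (t, x)) t := by
  have h := ((hu (t, x)).hasFDerivAt.comp t (hasFDerivAt_prodMk_left t x)).hasDerivAt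
  simpa [dtD, dirD, Function.comp_def] using h

lemma hasLineDerivAt_space {n : ℕ} {u : STn n → ℝ} (hu : Differentiable ℝ u) (t : ℝ)
    (j : Fin n) (x : Spc n) :
    HasLineDerivAt ℝ (fun y => u (t, y)) (dxD j u (t, x)) x (EuclideanSpace.single j 1) := by
  have h := ((hu (t, x)).hasFDerivAt.comp x (hasFDerivAt_prodMk_right t x)).hasLineDerivAt
    (EuclideanSpace.single j 1)
  simpa [dxD, dirD, Function.comp_def] using h

lemma hasLineDerivAt_plane {n : ℕ} {b : ℝ → ℝ} (hb : Differentiable ℝ b) (t : ℝ) (e : Spc n)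
    (j : Fin n) (x : Spc n) :
    HasLineDerivAt ℝ (fun y => b (t + inner ℝ e y)) (deriv b (t + inner ℝ e x) * e j) x
      (EuclideanSpace.single j 1) := by
  have h0 : HasFDerivAt (fun y : Spc n => t + inner ℝ e y) (innerSL ℝ e) x :=
    (innerSL ℝ e).hasFDerivAt.const_add t
  have h := ((hb (t + inner ℝ e x)).hasDerivAt.comp_hasFDerivAt x h0).hasLineDerivAt
    (EuclideanSpace.single j 1)
  simpa [Function.comp_def, EuclideanSpace.inner_single_right] using h

lemma integral_by_parts_slice {n : ℕ} {u u' b b' : Spc n → ℝ} {ρ : ℝ} (v : Spc n)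
    (hu : Continuous u) (hu' : Continuous u') (hb : Continuous b) (hb' : Continuous b')
    (hz : ∀ x, ρ < ‖x‖ → u x = 0) (hz' : ∀ x, ρ < ‖x‖ → u' x = 0)
    (hdu : ∀ x, HasLineDerivAt ℝ u (u' x) x v) (hdb : ∀ x, HasLineDerivAt ℝ b (b' x) x v) :
    ∫ x, u x * b' x = - ∫ x, u' x * b x := by
  have key : ∀ p q : Spc n → ℝ, Continuous p → Continuous q → (∀ x, ρ < ‖x‖ → p x = 0) →
      Integrable (fun x => ContinuousLinearMap.mul ℝ ℝ (p x) (q x)) := by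
    intro p q hp hq hp0
    refine Continuous.integrable_of_hasCompactSupport (by simp only [ContinuousLinearMap.mul_apply']; exact hp.mul hq) ?_
    refine HasCompactSupport.intro (isCompact_closedBall (0 : Spc n) ρ) fun x hx => ?_
    simp [hp0 x (by simpa using hx)]
  have h := integral_bilinear_hasLineDerivAt_right_eq_neg_left_of_integrable
    (B := ContinuousLinearMap.mul ℝ ℝ) (key u' b hu' hb hz') (key u b' hu hb' hz)
    (key u b hu hb hz) (fun x _ => hdu x) (fun x _ => hdb x)
  simpa using h

/-- Differentiation under the integral over a compact set. -/
lemma hasDerivAt_setIntegral {n : ℕ} {F F' : STn n → ℝ} (hF : Continuous F) (hF' : Continuous F')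
    (hd : ∀ t x, HasDerivAt (fun s => F (s, x)) (F' (t, x)) t) {K : Set (Spc n)}
    (hK : IsCompact K) (t : ℝ) :
    HasDerivAt (fun s => ∫ x in K, F (s, x)) (∫ x in K, F' (t, x)) t := by
  obtain ⟨M, hM⟩ := ((isCompact_closedBall t 1).prod hK).bddAbove_image hF'.norm.continuousOn
  have hslice : ∀ {G : STn n → ℝ}, Continuous G → ∀ s : ℝ, Continuous fun x => G (s, x) :=
    fun hG s => hG.comp (continuous_const.prodMk continuous_id)
  have hfin : IsFiniteMeasure (volume.restrict K) := ⟨by simpa using hK.measure_lt_top⟩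
  refine (hasDerivAt_integral_of_dominated_loc_of_deriv_le (F := fun s x => F (s, x))
    (F' := fun s x => F' (s, x)) (bound := fun _ => M)
    (Metric.closedBall_mem_nhds t one_pos) ?_ ?_ ?_ ?_ ?_ ?_).2
  · exact Filter.Eventually.of_forall fun s => (hslice hF s).aestronglyMeasurable
  · exact (hslice hF t).continuousOn.integrableOn_compact hK
  · exact (hslice hF' t).aestronglyMeasurable
  · refine (ae_restrict_mem hK.measurableSet).mono fun x hx s hs => ?_
    exact hM ⟨(s, x), ⟨hs, hx⟩, rfl⟩
  · exact integrable_const M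
  · exact Filter.Eventually.of_forall fun x s _ => hd s x
/-! ### Testing against plane waves -/

/-- The identity `∫ Δw · B(t + e·x) dx = ∫ w · B''(t + e·x) dx` for `‖e‖ = 1`. -/
lemma integral_lap_plane {n : ℕ} {w : STn n → ℝ} (hw : ContDiff ℝ 2 w) {r₀ : ℝ}
    (hsupp : ∀ z : STn n, 0 < z.1 → z.1 + r₀ < ‖z.2‖ → w z = 0)
    {B : ℝ → ℝ} (hB : ContDiff ℝ 2 B) {e : Spc n} (he : ‖e‖ = 1) {t : ℝ} (ht : 0 < t) :
    ∫ x, lapD w (t, x) * B (t + inner ℝ e x) =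
      ∫ x, w (t, x) * deriv (deriv B) (t + inner ℝ e x) := by
  have hB1 : ContDiff ℝ 1 (deriv B) := by
    have : ContDiff ℝ (1 + 1) B := by simpa [one_add_one_eq_two] using hB
    exact (contDiff_succ_iff_deriv.1 this).2.2
  have hB2 : Continuous (deriv (deriv B)) := hB1.continuous_deriv le_rfl
  have hP : Continuous fun x : Spc n => t + inner ℝ e x := by fun_prop
  have hw1 : ∀ j, ContDiff ℝ 1 (dxD j w) := fun j =>
    contDiff_dirD _ (by simpa [one_add_one_eq_two] using hw)
  have hw2 : ∀ j, Continuous (dxD j (dxD j w)) := fun j =>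
    (contDiff_dirD (m := 0) _ (by simpa using hw1 j)).continuous
  have hsl : ∀ {G : STn n → ℝ}, Continuous G → Continuous fun x => G (t, x) :=
    fun hG => hG.comp (continuous_const.prodMk continuous_id)
  have hz1 : ∀ j, ∀ z : STn n, 0 < z.1 → z.1 + r₀ < ‖z.2‖ → dxD j w z = 0 := fun j =>
    dirD_eq_zero_s3 _ hsupp
  have hz2 : ∀ j, ∀ z : STn n, 0 < z.1 → z.1 + r₀ < ‖z.2‖ → dxD j (dxD j w) z = 0 := fun j =>
    dirD_eq_zero_s3 _ (hz1 j)
  have hj : ∀ j, ∫ x, dxD j (dxD j w) (t, x) * B (t + inner ℝ e x) =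
      ∫ x, (w (t, x) * deriv (deriv B) (t + inner ℝ e x)) * (e j) ^ 2 := by
    intro j
    have e1 := integral_by_parts_slice (ρ := t + r₀) (EuclideanSpace.single j 1)
      (u := fun x => dxD j w (t, x)) (u' := fun x => dxD j (dxD j w) (t, x))
      (b := fun x => B (t + inner ℝ e x)) (b' := fun x => deriv B (t + inner ℝ e x) * e j)
      (hsl (hw1 j).continuous) (hsl (hw2 j)) (hB.continuous.comp hP)
      ((hB1.continuous.comp hP).mul continuous_const)
      (fun x hx => hz1 j _ ht hx) (fun x hx => hz2 j _ ht hx)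
      (hasLineDerivAt_space ((hw1 j).differentiable one_ne_zero) t j)
      (hasLineDerivAt_plane (hB.differentiable two_ne_zero) t e j)
    have e2 := integral_by_parts_slice (ρ := t + r₀) (EuclideanSpace.single j 1)
      (u := fun x => w (t, x)) (u' := fun x => dxD j w (t, x))
      (b := fun x => deriv B (t + inner ℝ e x))
      (b' := fun x => deriv (deriv B) (t + inner ℝ e x) * e j)
      (hsl hw.continuous) (hsl (hw1 j).continuous) (hB1.continuous.comp hP)
      ((hB2.comp hP).mul continuous_const)
      (fun x hx => hsupp _ ht hx) (fun x hx => hz1 j _ ht hx)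
      (hasLineDerivAt_space (hw.differentiable two_ne_zero) t j)
      (hasLineDerivAt_plane (hB1.differentiable one_ne_zero) t e j)
    have e3 : ∫ x, dxD j w (t, x) * (deriv B (t + inner ℝ e x) * e j) =
        (∫ x, dxD j w (t, x) * deriv B (t + inner ℝ e x)) * e j := by
      rw [← integral_mul_const]; congr 1; ext x; ring
    have e4 : ∫ x, w (t, x) * (deriv (deriv B) (t + inner ℝ e x) * e j) =
        (∫ x, w (t, x) * deriv (deriv B) (t + inner ℝ e x)) * e j := by
      rw [← integral_mul_const]; congr 1; ext x; ring
    rw [e3] at e1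
    rw [e4] at e2
    rw [integral_mul_const]
    linear_combination e1 - e j * e2
  have hsum : ∑ j, (e j) ^ 2 = 1 := by
    have := EuclideanSpace.real_norm_sq_eq e
    rw [← this, he, one_pow]
  simp only [lapD, Finset.sum_mul]
  rw [integral_finsetSum]
  · simp_rw [hj, integral_mul_const]
    rw [← Finset.mul_sum, hsum, mul_one]
  · intro j _
    refine Continuous.integrable_of_hasCompactSupport
      ((hsl (hw2 j)).mul (hB.continuous.comp hP)) ?_
    refine HasCompactSupport.intro (isCompact_closedBall (0 : Spc n) (t + r₀)) fun x hx => ?_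
    simp [hz2 j (t, x) ht (by simpa using hx)]

/-- Along a nonnegative plane wave `B(t + e·x)` the pairing
`∫ (∂ₜw B - w B') dx` is nondecreasing in time, since its derivative is `∫ □w B dx`;
as `B = 1` near `[-r₀, r₀]`, it starts from `∂ₜw(0,·)` paired with `1`. -/
lemma plane_wave_bound {n : ℕ} {w : STn n → ℝ} (hw : ContDiff ℝ 2 w) {r₀ T : ℝ} (hr₀ : 0 < r₀)
    (hsupp : ∀ z : STn n, 0 ≤ z.1 → z.1 + r₀ < ‖z.2‖ → w z = 0)
    (hbox : ∀ z : STn n, 0 < z.1 → z.1 < T → 0 ≤ boxD w z)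
    {B : ℝ → ℝ} (hB : ContDiff ℝ 2 B) (hB0 : ∀ s, 0 ≤ B s) (hB1 : ∀ s, |s| < 2 * r₀ → B s = 1)
    {e : Spc n} (he : ‖e‖ = 1) {t : ℝ} (ht0 : 0 ≤ t) (htT : t < T) :
    ∫ x, dtD w (0, x) ≤
      ∫ x, (dtD w (t, x) * B (t + inner ℝ e x) - w (t, x) * deriv B (t + inner ℝ e x)) := by
  have hB' : ContDiff ℝ 1 (deriv B) := by
    have : ContDiff ℝ (1 + 1) B := by simpa [one_add_one_eq_two] using hB
    exact (contDiff_succ_iff_deriv.1 this).2.2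
  have hB2 : Continuous (deriv (deriv B)) := hB'.continuous_deriv le_rfl
  have hP : Continuous fun z : STn n => z.1 + inner ℝ e z.2 := by fun_prop
  have hw1 : ContDiff ℝ 1 (dtD w) := contDiff_dirD _ (by simpa [one_add_one_eq_two] using hw)
  have hw2 : Continuous (dtD (dtD w)) :=
    (contDiff_dirD (m := 0) _ (by simpa using hw1)).continuous
  have hz1' : ∀ z : STn n, 0 < z.1 → z.1 + r₀ < ‖z.2‖ → dtD w z = 0 :=
    dirD_eq_zero_s3 _ fun z h => hsupp z h.le
  have hz1 := eq_zero_of_continuous hw1.continuous hz1'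
  have hz2 : ∀ z : STn n, 0 < z.1 → z.1 + r₀ < ‖z.2‖ → dtD (dtD w) z = 0 :=
    dirD_eq_zero_s3 _ hz1'
  set F : STn n → ℝ := fun z =>
    dtD w z * B (z.1 + inner ℝ e z.2) - w z * deriv B (z.1 + inner ℝ e z.2) with hFdef
  set F' : STn n → ℝ := fun z =>
    dtD (dtD w) z * B (z.1 + inner ℝ e z.2) -
      w z * deriv (deriv B) (z.1 + inner ℝ e z.2) with hF'def
  have hF : Continuous F := (hw1.continuous.mul (hB.continuous.comp hP)).sub
    (hw.continuous.mul (hB'.continuous.comp hP))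
  have hF' : Continuous F' := (hw2.mul (hB.continuous.comp hP)).sub
    (hw.continuous.mul (hB2.comp hP))
  have hd : ∀ s x, HasDerivAt (fun s => F (s, x)) (F' (s, x)) s := by
    intro s x
    have hp : HasDerivAt (fun s : ℝ => s + inner ℝ e x) 1 s := (hasDerivAt_id s).add_const _
    have b0 : HasDerivAt (fun s : ℝ => B (s + inner ℝ e x)) (deriv B (s + inner ℝ e x)) s := by
      simpa [Function.comp_def] using (hB.differentiable two_ne_zero _).hasDerivAt.comp s hp
    have b1 : HasDerivAt (fun s : ℝ => deriv B (s + inner ℝ e x))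
        (deriv (deriv B) (s + inner ℝ e x)) s := by
      simpa [Function.comp_def] using (hB'.differentiable one_ne_zero _).hasDerivAt.comp s hp
    have h := ((hasDerivAt_time (hw1.differentiable one_ne_zero) s x).mul b0).sub
      ((hasDerivAt_time (hw.differentiable two_ne_zero) s x).mul b1)
    refine h.congr_deriv ?_
    simp only [hF'def]; ring
  set K := Metric.closedBall (0 : Spc n) (T + r₀)
  have hK : IsCompact K := isCompact_closedBall _ _
  have hG := hasDerivAt_setIntegral hF hF' hd hK
  have hfull : ∀ s, 0 ≤ s → s < T → ∫ x in K, F (s, x) = ∫ x, F (s, x) := by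
    intro s hs hsT
    refine setIntegral_eq_integral_of_forall_compl_eq_zero fun x hx => ?_
    have hx' : s + r₀ < ‖x‖ := by
      have : T + r₀ < ‖x‖ := by simpa [K] using hx
      linarith
    simp [hFdef, hz1 (s, x) hs hx', hsupp (s, x) hs hx']
  have hmono : MonotoneOn (fun s => ∫ x in K, F (s, x)) (Set.Icc 0 t) := by
    refine monotoneOn_of_deriv_nonneg (convex_Icc 0 t)
      (fun s _ => (hG s).continuousAt.continuousWithinAt)
      (fun s _ => (hG s).differentiableAt.differentiableWithinAt) ?_
    intro s hs
    rw [interior_Icc] at hs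
    have hsT : s < T := hs.2.trans htT
    rw [(hG s).deriv]
    have h1 : ∫ x in K, F' (s, x) = ∫ x, F' (s, x) := by
      refine setIntegral_eq_integral_of_forall_compl_eq_zero fun x hx => ?_
      have hx' : s + r₀ < ‖x‖ := by
        have : T + r₀ < ‖x‖ := by simpa [K] using hx
        linarith
      simp [hF'def, hz2 (s, x) hs.1 hx', hsupp (s, x) hs.1.le hx']
    have hPs : Continuous fun x : Spc n => s + inner ℝ e x := by fun_prop
    have hsl : ∀ {G : STn n → ℝ}, Continuous G → Continuous fun x => G (s, x) :=
      fun hG => hG.comp (continuous_const.prodMk continuous_id)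
    have hint : ∀ p q : Spc n → ℝ, Continuous p → Continuous q →
        (∀ x, s + r₀ < ‖x‖ → p x = 0) → Integrable fun x => p x * q x := by
      intro p q hp hq h0
      refine Continuous.integrable_of_hasCompactSupport (hp.mul hq) ?_
      refine HasCompactSupport.intro (isCompact_closedBall (0 : Spc n) (s + r₀)) fun x hx => ?_
      simp [h0 x (by simpa using hx)]
    have hlapc : Continuous (lapD w) := by
      refine continuous_finsetSum _ fun j _ => ?_
      have h1 : ContDiff ℝ 1 (dxD j w) := contDiff_dirD _ (by simpa [one_add_one_eq_two] using hw)
      exact (contDiff_dirD (m := 0) _ (by simpa using h1)).continuous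
    have hlapz : ∀ x, s + r₀ < ‖x‖ → lapD w (s, x) = 0 := by
      intro x hx
      refine Finset.sum_eq_zero fun j _ => ?_
      exact dirD_eq_zero_s3 _ (dirD_eq_zero_s3 _ fun z h => hsupp z h.le) (s, x) hs.1 hx
    have h2 : ∫ x, F' (s, x) = ∫ x, boxD w (s, x) * B (s + inner ℝ e x) := by
      have i1 := hint (fun x => dtD (dtD w) (s, x)) (fun x => B (s + inner ℝ e x))
        (hsl hw2) (hB.continuous.comp hPs) (fun x hx => hz2 _ hs.1 hx)
      have i2 := hint (fun x => w (s, x)) (fun x => deriv (deriv B) (s + inner ℝ e x))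
        (hsl hw.continuous) (hB2.comp hPs) (fun x hx => hsupp _ hs.1.le hx)
      have i3 := hint (fun x => lapD w (s, x)) (fun x => B (s + inner ℝ e x))
        (hsl hlapc) (hB.continuous.comp hPs) hlapz
      simp only [hF'def, boxD, sub_mul]
      rw [integral_sub i1 i2, integral_sub i1 i3,
        integral_lap_plane hw (fun z h => hsupp z h.le) hB he hs.1]
    rw [h1, h2]
    exact integral_nonneg fun x => mul_nonneg (hbox _ hs.1 hsT) (hB0 _)
  have h0t := hmono (Set.left_mem_Icc.2 ht0) (Set.right_mem_Icc.2 ht0) ht0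
  simp only at h0t
  rw [hfull 0 le_rfl (ht0.trans_lt htT), hfull t ht0 htT] at h0t
  refine le_trans (le_of_eq ?_) h0t
  refine integral_congr_ae (Filter.Eventually.of_forall fun x => ?_)
  by_cases hx : r₀ < ‖x‖
  · have hx' : (0 : ℝ) + r₀ < ‖x‖ := by simpa using hx
    simp [hFdef, hz1 (0, x) le_rfl hx', hsupp (0, x) le_rfl hx']
  · have hin : |inner ℝ e x| < 2 * r₀ := by
      have := abs_real_inner_le_norm e x
      rw [he, one_mul] at this
      linarith
    have hev : B =ᶠ[nhds (inner ℝ e x)] fun _ => (1 : ℝ) := by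
      filter_upwards [(isOpen_lt continuous_abs continuous_const).mem_nhds hin] with s hs
        using hB1 s hs
    simp [hFdef, hB1 _ hin, hev.deriv_eq]
/-! ### A layer along the light cone -/

/-- The part of the support cone `‖x‖ ≤ t + r₀` within distance `L` of the light cone,
at times `R/2 ≤ t ≤ 3R/4`. -/
def coneLayer (n : ℕ) (r₀ L R : ℝ) : Set (STn n) :=
  {z | R / 2 ≤ z.1 ∧ z.1 ≤ 3 * R / 4 ∧ z.1 - L ≤ ‖z.2‖ ∧ ‖z.2‖ ≤ z.1 + r₀}

lemma isClosed_coneLayer (n : ℕ) (r₀ L R : ℝ) : IsClosed (coneLayer n r₀ L R) := by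
  simp only [coneLayer, Set.ofPred_and]
  refine IsClosed.inter ?_ (IsClosed.inter ?_ (IsClosed.inter ?_ ?_)) <;>
    exact isClosed_le (by fun_prop) (by fun_prop)

lemma isCompact_coneLayer (n : ℕ) (r₀ L R : ℝ) : IsCompact (coneLayer n r₀ L R) := by
  refine IsCompact.of_isClosed_subset
    ((isCompact_Icc (a := R / 2) (b := 3 * R / 4)).prod
      (isCompact_closedBall (0 : Spc n) (3 * R / 4 + r₀))) (isClosed_coneLayer n r₀ L R) ?_
  rintro ⟨s, x⟩ ⟨h1, h2, h3, h4⟩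
  simp only at h1 h2 h3 h4
  exact ⟨⟨h1, h2⟩, by simpa using by linarith⟩

lemma volume_annulus_le (m : ℕ) {r₀ L s : ℝ} (hr₀ : 0 < r₀) (hL : 0 ≤ L) (hs : 0 ≤ s) :
    volume {x : Spc (m + 1) | s - L ≤ ‖x‖ ∧ ‖x‖ ≤ s + r₀} ≤
      ENNReal.ofReal ((L + r₀) * (m + 1) * (s + r₀) ^ m) *
        volume (Metric.ball (0 : Spc (m + 1)) 1) := by
  set b := max (s - L) 0
  have hb0 : 0 ≤ b := le_max_right _ _
  have hba : b ≤ s + r₀ := max_le (by linarith) (by linarith)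
  have hab : s + r₀ - b ≤ L + r₀ := by linarith [le_max_left (s - L) 0]
  have hsub : {x : Spc (m + 1) | s - L ≤ ‖x‖ ∧ ‖x‖ ≤ s + r₀} ⊆
      Metric.closedBall 0 (s + r₀) \ Metric.ball 0 b := by
    rintro x ⟨h1, h2⟩
    refine ⟨by simpa using h2, ?_⟩
    simpa [b] using h1
  refine (measure_mono hsub).trans ?_
  rw [measure_sdiff (Metric.ball_subset_closedBall.trans (Metric.closedBall_subset_closedBall hba))
    measurableSet_ball.nullMeasurableSet measure_ball_lt_top.ne,
    Measure.addHaar_closedBall _ _ (by linarith), Measure.addHaar_ball _ _ hb0,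
    ← ENNReal.sub_mul (fun _ _ => measure_ball_lt_top.ne),
    ← ENNReal.ofReal_sub _ (by positivity)]
  gcongr
  have h := abs_pow_sub_pow_le (s + r₀) b (m + 1)
  rw [abs_of_nonneg (a := s + r₀) (by linarith), abs_of_nonneg hb0, max_eq_left hba,
    abs_of_nonneg (a := s + r₀ - b) (by linarith)] at h
  simp only [finrank_euclideanSpace, Fintype.card_fin]
  refine (le_abs_self _).trans (h.trans ?_)
  simp only [Nat.add_sub_cancel]
  push_cast
  gcongr

lemma volume_coneLayer_le (m : ℕ) {r₀ L R : ℝ} (hr₀ : 0 < r₀) (hL : 0 ≤ L) (hR : 1 ≤ R) :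
    volume.real (coneLayer (m + 1) r₀ L R) ≤
      ((L + r₀) * (m + 1) * (1 + r₀) ^ m * volume.real (Metric.ball (0 : Spc (m + 1)) 1)) *
        R ^ (m + 1) := by
  set V := volume (Metric.ball (0 : Spc (m + 1)) 1)
  have hV : V ≠ ⊤ := measure_ball_lt_top.ne
  have hmeas := (isClosed_coneLayer (m + 1) r₀ L R).measurableSet
  have h : volume (coneLayer (m + 1) r₀ L R) ≤
      ENNReal.ofReal R * (ENNReal.ofReal ((L + r₀) * (m + 1) * ((1 + r₀) * R) ^ m) * V) := by
    rw [Measure.volume_eq_prod, Measure.prod_apply hmeas]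
    calc ∫⁻ s, volume (Prod.mk s ⁻¹' coneLayer (m + 1) r₀ L R)
        ≤ ∫⁻ s, (Set.Icc 0 R).indicator (fun _ =>
          ENNReal.ofReal ((L + r₀) * (m + 1) * ((1 + r₀) * R) ^ m) * V) s := by
          refine lintegral_mono fun s => ?_
          by_cases hs : s ∈ Set.Icc (R / 2) (3 * R / 4)
          · have hs0 : 0 ≤ s := by linarith [hs.1]
            have hsR : s ≤ R := by linarith [hs.2]
            rw [Set.indicator_of_mem (by exact ⟨hs0, hsR⟩)]
            refine (measure_mono ?_).trans ((volume_annulus_le m hr₀ hL hs0).trans ?_)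
            · rintro x ⟨-, -, h3, h4⟩
              exact ⟨h3, h4⟩
            · gcongr
              nlinarith
          · have : Prod.mk s ⁻¹' coneLayer (m + 1) r₀ L R = ∅ := by
              ext x
              simp only [Set.mem_preimage, Set.mem_empty_iff_false, iff_false]
              rintro ⟨h1, h2, -, -⟩
              exact hs ⟨h1, h2⟩
            rw [this, measure_empty]
            exact zero_le
      _ = _ := by
          rw [lintegral_indicator measurableSet_Icc, lintegral_const, Measure.restrict_apply_univ,
            Real.volume_Icc, sub_zero, mul_comm]
  have h2 := ENNReal.toReal_mono (by finiteness) h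
  refine h2.trans (le_of_eq ?_)
  rw [ENNReal.toReal_mul, ENNReal.toReal_mul, ENNReal.toReal_ofReal (by linarith),
    ENNReal.toReal_ofReal (by positivity), mul_pow, Measure.real]
  ring

/-! ### Averaging over directions -/

/-- The unit vector in the upper hemisphere over the point `y` of the unit ball of `ℝᵐ`. -/
noncomputable def hemi {m : ℕ} (y : Fin m → ℝ) : Spc (m + 1) :=
  WithLp.toLp 2 (Fin.cons (√(1 - ∑ i, (y i) ^ 2)) y)

lemma continuous_hemi {m : ℕ} : Continuous (hemi : (Fin m → ℝ) → Spc (m + 1)) := by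
  refine (PiLp.continuous_toLp 2 _).comp (continuous_pi fun i => ?_)
  refine Fin.cases ?_ (fun j => ?_) i
  · simp only [Fin.cons_zero]; fun_prop
  · simp only [Fin.cons_succ]; fun_prop

lemma norm_hemi {m : ℕ} {y : Fin m → ℝ} (hy : y ∈ Metric.closedBall (0 : Fin m → ℝ) (1 / (m + 1))) :
    ‖hemi y‖ = 1 := by
  have hle : ∑ i, (y i) ^ 2 ≤ 1 := by
    have h1 : ∀ i, (y i) ^ 2 ≤ 1 / (m + 1) := by
      intro i
      have h2 : |y i| ≤ 1 / (m + 1) := by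
        have := norm_le_pi_norm y i
        rw [mem_closedBall_zero_iff] at hy
        exact this.trans hy
      have h3 : (1 : ℝ) / (m + 1) ≤ 1 := by
        rw [div_le_one (by positivity)]; linarith [(Nat.cast_nonneg m : (0 : ℝ) ≤ m)]
      rw [← sq_abs]
      nlinarith [abs_nonneg (y i)]
    calc ∑ i, (y i) ^ 2 ≤ ∑ _i : Fin m, (1 : ℝ) / (m + 1) := Finset.sum_le_sum fun i _ => h1 i
      _ = m / (m + 1) := by simp [div_eq_mul_inv]
      _ ≤ 1 := by rw [div_le_one (by positivity)]; linarith
  have h : ‖hemi y‖ ^ 2 = 1 := by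
    rw [EuclideanSpace.real_norm_sq_eq, Fin.sum_univ_succ]
    simp only [hemi, Fin.cons_zero, Fin.cons_succ]
    rw [Real.sq_sqrt (by linarith)]
    ring
  nlinarith [norm_nonneg (hemi y)]

/-- Inside the support cone, a point close to the characteristic plane `t + e·x = 0` lies within
`O(√t)` of `-t e`, so `e` is determined up to `O(t^{-1/2})` by `(t, x)`. -/
lemma direction_close {n : ℕ} {r₀ t : ℝ} (hr₀ : 0 < r₀) (ht : r₀ ≤ t) {e x : Spc n}
    (he : ‖e‖ = 1) (h1 : |t + inner ℝ e x| ≤ 3 * r₀) (h2 : ‖x‖ ≤ t + r₀) (i : Fin n) :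
    |e i - (-(x i) / t)| ^ 2 ≤ 9 * r₀ / t := by
  have ht0 : 0 < t := hr₀.trans_le ht
  have h3 : ‖t • e + x‖ ^ 2 ≤ 9 * r₀ * t := by
    rw [norm_add_sq_real, norm_smul, he, inner_smul_left]
    have := (abs_le.1 h1).2
    have hx : ‖x‖ ^ 2 ≤ (t + r₀) ^ 2 := by gcongr
    simp only [Real.norm_eq_abs, mul_one, sq_abs, conj_trivial]
    nlinarith
  have h4 : |(t • e + x) i| ≤ ‖t • e + x‖ := PiLp.norm_apply_le (t • e + x) i
  have h5 : e i - (-(x i) / t) = (t • e + x) i / t := by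
    simp only [PiLp.add_apply, PiLp.smul_apply, smul_eq_mul]
    field_simp
    ring
  rw [h5, abs_div, abs_of_pos ht0, div_pow, div_le_div_iff₀ (by positivity) ht0]
  have h6 : |(t • e + x) i| ^ 2 ≤ 9 * r₀ * t := le_trans (by gcongr) h3
  nlinarith

/-- If `x` lies outside the support at time `a`, then `w(t, x)` is the integral of `∂ₜw` over
`[a, t]`. Near the light cone `t - a` can be taken of order `r₀`. -/
lemma enorm_le_lintegral_dt {n : ℕ} {w : STn n → ℝ} (hw : ContDiff ℝ 2 w) {r₀ : ℝ}
    (hsupp : ∀ z : STn n, 0 ≤ z.1 → z.1 + r₀ < ‖z.2‖ → w z = 0)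
    {a t : ℝ} (ha : 0 ≤ a) (hat : a ≤ t) {x : Spc n} (hx : a + r₀ < ‖x‖) :
    ‖w (t, x)‖ₑ ≤ ∫⁻ s in Set.Ioc a t, ‖dtD w (s, x)‖ₑ := by
  have hw1 : ContDiff ℝ 1 (dtD w) := contDiff_dirD _ (by simpa [one_add_one_eq_two] using hw)
  have hc : Continuous fun s : ℝ => dtD w (s, x) :=
    hw1.continuous.comp (continuous_id.prodMk continuous_const)
  have h := intervalIntegral.integral_eq_sub_of_hasDerivAt (a := a) (b := t)
    (fun s _ => hasDerivAt_time (hw.differentiable two_ne_zero) s x) (hc.intervalIntegrable _ _)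
  rw [hsupp (a, x) ha hx, sub_zero, intervalIntegral.integral_of_le hat] at h
  rw [← h]
  exact enorm_integral_le_lintegral_enorm _

/-- Averaging the plane wave bound over directions and over times `2R/3 ≤ t ≤ 3R/4`. For given
`(t, x)` only a set of directions of measure `O(R^{-m/2})` contributes, and only if `(t, x)` is
close to the light cone. -/
lemma averaged_bound (m : ℕ) {w : STn (m + 1) → ℝ} (hw : ContDiff ℝ 2 w) {r₀ T : ℝ} (hr₀ : 0 < r₀)
    (hsupp : ∀ z : STn (m + 1), 0 ≤ z.1 → z.1 + r₀ < ‖z.2‖ → w z = 0)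
    (hbox : ∀ z : STn (m + 1), 0 < z.1 → z.1 < T → 0 ≤ boxD w z)
    {B : ℝ → ℝ} (hB : ContDiff ℝ 2 B) (hB0 : ∀ s, 0 ≤ B s) (hBle : ∀ s, B s ≤ 1)
    (hB1 : ∀ s, |s| < 2 * r₀ → B s = 1) (hBz : ∀ s, 3 * r₀ < |s| → B s = 0)
    {M : ℝ} (hM : ∀ s, |deriv B s| ≤ M)
    {R : ℝ} (hR : 30 * r₀ ≤ R) (hRT : R < T) :
    ENNReal.ofReal (R / 12) * (ENNReal.ofReal ((2 * (1 / (m + 1))) ^ m) *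
        ENNReal.ofReal (∫ x, dtD w (0, x))) ≤
      ENNReal.ofReal ((2 * √(27 * r₀ / (2 * R))) ^ m) * ((1 + ENNReal.ofReal M *
        ENNReal.ofReal (4 * r₀)) *
        ∫⁻ z in coneLayer (m + 1) r₀ (30 * r₀) R, ‖dtD w z‖ₑ) := by
  have hR0 : 0 < R := by linarith
  have hw1 : ContDiff ℝ 1 (dtD w) := contDiff_dirD _ (by simpa [one_add_one_eq_two] using hw)
  have hz1 : ∀ z : STn (m + 1), 0 ≤ z.1 → z.1 + r₀ < ‖z.2‖ → dtD w z = 0 :=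
    eq_zero_of_continuous hw1.continuous (dirD_eq_zero_s3 _ fun z h => hsupp z h.le)
  have hBz' : ∀ s, 3 * r₀ < |s| → deriv B s = 0 := by
    intro s hs
    have hev : B =ᶠ[nhds s] fun _ => (0 : ℝ) := by
      filter_upwards [(isOpen_lt continuous_const continuous_abs).mem_nhds hs] with u hu
        using hBz u hu
    simp [hev.deriv_eq]
  set X := ENNReal.ofReal (∫ x, dtD w (0, x))
  set Q := coneLayer (m + 1) r₀ (30 * r₀) R with hQdef
  have hQ : MeasurableSet Q := (isClosed_coneLayer _ _ _ _).measurableSet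
  set q : STn (m + 1) → ℝ≥0∞ := Q.indicator fun z => ‖dtD w z‖ₑ with hqdef
  have hq : Measurable q := hw1.continuous.enorm.measurable.indicator hQ
  set Z : Spc (m + 1) → ℝ≥0∞ := fun x => ∫⁻ s, q (s, x) with hZdef
  have hZ : Measurable Z := hq.lintegral_prod_left'
  set D := Metric.closedBall (0 : Fin m → ℝ) (1 / (m + 1))
  have hDvol : volume D = ENNReal.ofReal ((2 * (1 / (m + 1))) ^ m) := by
    rw [Real.volume_pi_closedBall _ (by positivity), Fintype.card_fin]
  -- the points reached by the plane wave in direction `hemi y` at time `t`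
  let S : ℝ → Set (Spc (m + 1) × (Fin m → ℝ)) := fun t =>
    {p | |t + inner ℝ (hemi p.2) p.1| ≤ 3 * r₀} ∩ {p | ‖p.1‖ ≤ t + r₀}
  have hS : ∀ t, MeasurableSet (S t) := by
    intro t
    have h1 : Continuous fun p : Spc (m + 1) × (Fin m → ℝ) => t + inner ℝ (hemi p.2) p.1 :=
      continuous_const.add ((continuous_hemi.comp continuous_snd).inner continuous_fst)
    exact (measurableSet_le h1.abs.measurable measurable_const).inter
      (measurableSet_le continuous_fst.norm.measurable measurable_const)
  let A : Set (STn (m + 1)) := {z | z.1 - 3 * r₀ ≤ ‖z.2‖} ∩ {z | ‖z.2‖ ≤ z.1 + r₀}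
  have hA : MeasurableSet A :=
    (measurableSet_le (by fun_prop) (by fun_prop)).inter
      (measurableSet_le (by fun_prop) (by fun_prop))
  have hSA : ∀ t y x, ‖hemi y‖ = 1 → (x, y) ∈ S t → (t, x) ∈ A := by
    rintro t y x hy ⟨h1, h2⟩
    refine ⟨?_, h2⟩
    have h3 := (abs_le.1 (abs_real_inner_le_norm (hemi y) x)).1
    have h1' : |t + inner ℝ (hemi y) x| ≤ 3 * r₀ := h1
    have h4 := (abs_le.1 h1').2
    rw [hy] at h3
    change t - 3 * r₀ ≤ ‖x‖
    linarith
  let ρ : ℝ := √(27 * r₀ / (2 * R))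
  set J := Set.Icc (2 * R / 3) (3 * R / 4)
  -- one direction
  have step1 : ∀ t ∈ J, ∀ y ∈ D,
      X ≤ ∫⁻ x, (S t).indicator 1 (x, y) * (q (t, x) + ENNReal.ofReal M * Z x) := by
    intro t ht y hy
    have ht0 : 0 ≤ t := by linarith [ht.1]
    have htT : t < T := by linarith [ht.2]
    have h := plane_wave_bound hw hr₀ hsupp hbox hB hB0 hB1 (norm_hemi hy) ht0 htT
    refine (ENNReal.ofReal_le_ofReal (h.trans (le_abs_self _))).trans ?_
    rw [← Real.norm_eq_abs, ofReal_norm]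
    refine (enorm_integral_le_lintegral_enorm _).trans (lintegral_mono fun x => ?_)
    by_cases hx : (x, y) ∈ S t
    · have hAx := hSA t y x (norm_hemi hy) hx
      have hx1 : t - 3 * r₀ ≤ ‖x‖ := hAx.1
      have hx2 : ‖x‖ ≤ t + r₀ := hAx.2
      have hQx : (t, x) ∈ Q :=
        ⟨by simp only; linarith [ht.1], ht.2, by simp only; linarith, hx2⟩
      rw [Set.indicator_of_mem hx, Pi.one_apply, one_mul]
      refine (enorm_sub_le).trans (add_le_add ?_ ?_)
      · rw [hqdef, Set.indicator_of_mem hQx, enorm_mul]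
        refine mul_le_of_le_one_right' ?_
        rw [← ofReal_norm, Real.norm_of_nonneg (hB0 _)]
        exact ENNReal.ofReal_le_one.2 (hBle _)
      · rw [enorm_mul, mul_comm]
        refine mul_le_mul' ?_ ?_
        · rw [← ofReal_norm]
          exact ENNReal.ofReal_le_ofReal (hM _)
        · refine (enorm_le_lintegral_dt hw hsupp (a := t - 5 * r₀) (by linarith [ht.1])
            (by linarith) (by linarith)).trans ?_
          refine le_trans ?_ (setLIntegral_le_lintegral (Set.Ioc (t - 5 * r₀) t) _)
          refine setLIntegral_mono' measurableSet_Ioc fun s hs => ?_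
          by_cases hsx : ‖x‖ ≤ s + r₀
          · have hQs : (s, x) ∈ Q :=
              ⟨by simp only; linarith [ht.1, hs.1], by simp only; linarith [ht.2, hs.2],
                by simp only; linarith [hs.2], hsx⟩
            rw [hqdef, Set.indicator_of_mem hQs]
          · rw [hz1 (s, x) (by simp only; linarith [ht.1, hs.1]) (not_le.1 hsx)]
            simp
    · have hzero : dtD w (t, x) * B (t + inner ℝ (hemi y) x) -
          w (t, x) * deriv B (t + inner ℝ (hemi y) x) = 0 := by
        by_cases hx2 : ‖x‖ ≤ t + r₀
        · have hx3 : 3 * r₀ < |t + inner ℝ (hemi y) x| := by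
            by_contra hcon
            exact hx ⟨not_lt.1 hcon, hx2⟩
          rw [hBz _ hx3, hBz' _ hx3]; ring
        · rw [hz1 (t, x) ht0 (not_le.1 hx2), hsupp (t, x) ht0 (not_le.1 hx2)]; ring
      rw [hzero]
      simp
  -- average over directions
  have step2 : ∀ t ∈ J, volume D * X ≤ ENNReal.ofReal ((2 * ρ) ^ m) *
      ∫⁻ x, A.indicator 1 (t, x) * (q (t, x) + ENNReal.ofReal M * Z x) := by
    intro t ht
    have htr : r₀ ≤ t := by linarith [ht.1]
    have ht0 : 0 < t := by linarith
    have hqt : Measurable fun x => q (t, x) + ENNReal.ofReal M * Z x :=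
      (hq.comp measurable_prodMk_left).add (hZ.const_mul _)
    calc volume D * X = ∫⁻ _y in D, X := by rw [setLIntegral_const, mul_comm]
      _ ≤ ∫⁻ y in D, ∫⁻ x, (S t).indicator 1 (x, y) * (q (t, x) + ENNReal.ofReal M * Z x) :=
          setLIntegral_mono' Metric.isClosed_closedBall.measurableSet (step1 t ht)
      _ = ∫⁻ x, ∫⁻ y in D, (S t).indicator 1 (x, y) * (q (t, x) + ENNReal.ofReal M * Z x) := by
          refine lintegral_lintegral_swap ?_
          refine Measurable.aemeasurable (Measurable.mul ?_ (hqt.comp measurable_snd))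
          exact (measurable_one.indicator (hS t)).comp measurable_swap
      _ ≤ ∫⁻ x, ENNReal.ofReal ((2 * ρ) ^ m) *
            (A.indicator 1 (t, x) * (q (t, x) + ENNReal.ofReal M * Z x)) := by
          refine lintegral_mono fun x => ?_
          have hSx : Measurable fun y =>
              (S t).indicator (1 : Spc (m + 1) × (Fin m → ℝ) → ℝ≥0∞) (x, y) :=
            (measurable_one.indicator (hS t)).comp measurable_prodMk_left
          simp only
          rw [lintegral_mul_const _ hSx, ← mul_assoc]
          refine mul_le_mul_left ?_ _
          have hpt : ∀ y ∈ D, (S t).indicator (1 : Spc (m + 1) × (Fin m → ℝ) → ℝ≥0∞) (x, y) ≤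
              A.indicator 1 (t, x) *
                (Metric.closedBall (fun i : Fin m => -(x i.succ) / t) ρ).indicator 1 y := by
            intro y hy
            by_cases hx : (x, y) ∈ S t
            · have hyb : y ∈ Metric.closedBall (fun i : Fin m => -(x i.succ) / t) ρ := by
                rw [mem_closedBall_iff_norm, pi_norm_le_iff_of_nonneg (Real.sqrt_nonneg _)]
                intro i
                have h := direction_close hr₀ htr (norm_hemi hy) hx.1 hx.2 i.succ
                have hyi : (hemi y) i.succ = y i := by simp [hemi]
                rw [hyi] at h
                rw [Pi.sub_apply, Real.norm_eq_abs]
                refine Real.le_sqrt_of_sq_le (h.trans ?_)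
                rw [div_le_div_iff₀ ht0 (by positivity)]
                nlinarith [ht.1]
              rw [Set.indicator_of_mem hx, Set.indicator_of_mem (hSA t y x (norm_hemi hy) hx),
                Set.indicator_of_mem hyb]
              simp
            · rw [Set.indicator_of_notMem hx]
              exact zero_le
          calc ∫⁻ y in D, (S t).indicator (1 : Spc (m + 1) × (Fin m → ℝ) → ℝ≥0∞) (x, y)
              ≤ ∫⁻ y in D, A.indicator 1 (t, x) *
                (Metric.closedBall (fun i : Fin m => -(x i.succ) / t) ρ).indicator 1 y :=
                setLIntegral_mono' Metric.isClosed_closedBall.measurableSet hpt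
            _ ≤ ∫⁻ y, A.indicator 1 (t, x) *
                (Metric.closedBall (fun i : Fin m => -(x i.succ) / t) ρ).indicator 1 y :=
                setLIntegral_le_lintegral _ _
            _ = ENNReal.ofReal ((2 * ρ) ^ m) * A.indicator 1 (t, x) := by
                rw [lintegral_const_mul _
                  (measurable_one.indicator Metric.isClosed_closedBall.measurableSet),
                  lintegral_indicator_one Metric.isClosed_closedBall.measurableSet,
                  Real.volume_pi_closedBall _ (Real.sqrt_nonneg _), Fintype.card_fin, mul_comm]
      _ = _ := lintegral_const_mul _ (Measurable.mul
          ((measurable_one.indicator hA).comp measurable_prodMk_left) hqt)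
  -- average over times
  have hJvol : volume J = ENNReal.ofReal (R / 12) := by
    rw [Real.volume_Icc]; congr 1; ring
  have hfull : ∫⁻ t, ∫⁻ x, q (t, x) = ∫⁻ z in Q, ‖dtD w z‖ₑ := by
    rw [← lintegral_prod _ hq.aemeasurable, ← Measure.volume_eq_prod, hqdef,
      lintegral_indicator hQ]
  have hfull' : ∫⁻ x, Z x = ∫⁻ z in Q, ‖dtD w z‖ₑ := by
    rw [← hfull, hZdef]
    exact lintegral_lintegral_swap (f := fun x t => q (t, x))
      (hq.comp measurable_swap).aemeasurable
  have hAx : ∀ x, ∫⁻ t, A.indicator (1 : STn (m + 1) → ℝ≥0∞) (t, x) ≤ ENNReal.ofReal (4 * r₀) := by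
    intro x
    have : ∀ t, A.indicator (1 : STn (m + 1) → ℝ≥0∞) (t, x) =
        (Set.Icc (‖x‖ - r₀) (‖x‖ + 3 * r₀)).indicator 1 t := by
      intro t
      have hiff : (t, x) ∈ A ↔ t ∈ Set.Icc (‖x‖ - r₀) (‖x‖ + 3 * r₀) := by
        constructor
        · rintro ⟨h1, h2⟩
          have h1' : t - 3 * r₀ ≤ ‖x‖ := h1
          have h2' : ‖x‖ ≤ t + r₀ := h2
          constructor <;> linarith
        · rintro ⟨h1, h2⟩
          constructor
          · change t - 3 * r₀ ≤ ‖x‖; linarith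
          · change ‖x‖ ≤ t + r₀; linarith
      by_cases h : (t, x) ∈ A
      · rw [Set.indicator_of_mem h, Set.indicator_of_mem (hiff.1 h)]; rfl
      · rw [Set.indicator_of_notMem h, Set.indicator_of_notMem (fun h' => h (hiff.2 h'))]
    simp_rw [this]
    rw [lintegral_indicator_one measurableSet_Icc, Real.volume_Icc]
    exact ENNReal.ofReal_le_ofReal (by linarith)
  rw [← hJvol, ← hDvol]
  have hmeasA : Measurable fun z : STn (m + 1) => A.indicator (1 : STn (m + 1) → ℝ≥0∞) z :=
    measurable_one.indicator hA
  have hAZ : Measurable fun z : STn (m + 1) =>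
      A.indicator (1 : STn (m + 1) → ℝ≥0∞) z * Z z.2 := hmeasA.mul (hZ.comp measurable_snd)
  calc volume J * (volume D * X) = ∫⁻ _t in J, volume D * X := by
        rw [setLIntegral_const, mul_comm]
    _ ≤ ∫⁻ t in J, ENNReal.ofReal ((2 * ρ) ^ m) *
        ∫⁻ x, A.indicator 1 (t, x) * (q (t, x) + ENNReal.ofReal M * Z x) :=
        setLIntegral_mono' measurableSet_Icc step2
    _ ≤ ∫⁻ t, ENNReal.ofReal ((2 * ρ) ^ m) *
        ∫⁻ x, A.indicator 1 (t, x) * (q (t, x) + ENNReal.ofReal M * Z x) :=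
        setLIntegral_le_lintegral _ _
    _ = ENNReal.ofReal ((2 * ρ) ^ m) *
        ∫⁻ t, ∫⁻ x, A.indicator 1 (t, x) * (q (t, x) + ENNReal.ofReal M * Z x) :=
        lintegral_const_mul' _ _ ENNReal.ofReal_ne_top
    _ ≤ _ := by
        refine mul_le_mul_right ?_ _
        calc ∫⁻ t, ∫⁻ x, A.indicator 1 (t, x) * (q (t, x) + ENNReal.ofReal M * Z x)
            ≤ ∫⁻ t, ∫⁻ x, (q (t, x) +
                ENNReal.ofReal M * (A.indicator 1 (t, x) * Z x)) := by
              refine lintegral_mono fun t => lintegral_mono fun x => ?_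
              by_cases h : (t, x) ∈ A
              · rw [Set.indicator_of_mem h]; simp
              · rw [Set.indicator_of_notMem h]; simp
          _ = ∫⁻ t, ((∫⁻ x, q (t, x)) +
                ENNReal.ofReal M * ∫⁻ x, A.indicator 1 (t, x) * Z x) := by
              refine lintegral_congr fun t => ?_
              have hqt : Measurable fun x => q (t, x) := hq.comp measurable_prodMk_left
              rw [lintegral_add_left hqt,
                lintegral_const_mul' _ _ ENNReal.ofReal_ne_top]
          _ = (∫⁻ t, ∫⁻ x, q (t, x)) +
                ENNReal.ofReal M * ∫⁻ t, ∫⁻ x, A.indicator 1 (t, x) * Z x := by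
              rw [lintegral_add_left hq.lintegral_prod_right',
                lintegral_const_mul' _ _ ENNReal.ofReal_ne_top]
          _ = (∫⁻ z in Q, ‖dtD w z‖ₑ) +
                ENNReal.ofReal M * ∫⁻ x, ∫⁻ t, A.indicator 1 (t, x) * Z x := by
              rw [hfull, lintegral_lintegral_swap hAZ.aemeasurable]
          _ ≤ (∫⁻ z in Q, ‖dtD w z‖ₑ) +
                ENNReal.ofReal M * ∫⁻ x, ENNReal.ofReal (4 * r₀) * Z x := by
              gcongr with x
              have hAs : Measurable fun t => A.indicator (1 : STn (m + 1) → ℝ≥0∞) (t, x) :=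
                hmeasA.comp measurable_prodMk_right
              rw [lintegral_mul_const _ hAs]
              exact mul_le_mul_left (hAx x) _
          _ = _ := by
              rw [lintegral_const_mul' _ _ ENNReal.ofReal_ne_top, hfull', add_mul, one_mul,
                mul_assoc]

/-! ### From `L¹` to `L^q` lower bounds -/

/-- For `R ≤ 30 r₀` the layer contains every point of the support with `R/2 ≤ t ≤ 3R/4`, and the
plane wave bound with `B = 1` (growth of the spatial mean of `∂ₜw`) suffices. -/
lemma small_time_bound (m : ℕ) {w : STn (m + 1) → ℝ} (hw : ContDiff ℝ 2 w) {r₀ T : ℝ}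
    (hr₀ : 0 < r₀) (hsupp : ∀ z : STn (m + 1), 0 ≤ z.1 → z.1 + r₀ < ‖z.2‖ → w z = 0)
    (hbox : ∀ z : STn (m + 1), 0 < z.1 → z.1 < T → 0 ≤ boxD w z)
    {R : ℝ} (hR0 : 0 < R) (hR : R ≤ 30 * r₀) (hRT : R < T) :
    ENNReal.ofReal (R / 4) * ENNReal.ofReal (∫ x, dtD w (0, x)) ≤
      ∫⁻ z in coneLayer (m + 1) r₀ (30 * r₀) R, ‖dtD w z‖ₑ := by
  have hw1 : ContDiff ℝ 1 (dtD w) := contDiff_dirD _ (by simpa [one_add_one_eq_two] using hw)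
  have hz1 : ∀ z : STn (m + 1), 0 ≤ z.1 → z.1 + r₀ < ‖z.2‖ → dtD w z = 0 :=
    eq_zero_of_continuous hw1.continuous (dirD_eq_zero_s3 _ fun z h => hsupp z h.le)
  set X := ENNReal.ofReal (∫ x, dtD w (0, x))
  set Q := coneLayer (m + 1) r₀ (30 * r₀) R with hQdef
  have hQ : MeasurableSet Q := (isClosed_coneLayer _ _ _ _).measurableSet
  set q : STn (m + 1) → ℝ≥0∞ := Q.indicator fun z => ‖dtD w z‖ₑ with hqdef
  have hq : Measurable q := hw1.continuous.enorm.measurable.indicator hQ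
  have hfull : ∫⁻ t, ∫⁻ x, q (t, x) = ∫⁻ z in Q, ‖dtD w z‖ₑ := by
    rw [← lintegral_prod _ hq.aemeasurable, ← Measure.volume_eq_prod, hqdef,
      lintegral_indicator hQ]
  set J := Set.Icc (R / 2) (3 * R / 4)
  have hJvol : volume J = ENNReal.ofReal (R / 4) := by
    rw [Real.volume_Icc]; congr 1; ring
  have step : ∀ t ∈ J, X ≤ ∫⁻ x, q (t, x) := by
    intro t ht
    have ht0 : 0 ≤ t := by linarith [ht.1]
    have h := plane_wave_bound hw hr₀ hsupp hbox (B := fun _ => 1) contDiff_const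
      (fun _ => zero_le_one) (fun _ _ => rfl) (e := EuclideanSpace.single 0 1) (by simp) ht0
      (by linarith [ht.2])
    refine (ENNReal.ofReal_le_ofReal (h.trans (le_abs_self _))).trans ?_
    rw [← Real.norm_eq_abs, ofReal_norm]
    refine (enorm_integral_le_lintegral_enorm _).trans (lintegral_mono fun x => ?_)
    simp only [mul_one, deriv_const, mul_zero, sub_zero]
    by_cases hx : ‖x‖ ≤ t + r₀
    · have hQx : (t, x) ∈ Q :=
        ⟨ht.1, ht.2, by simp only; linarith [ht.2, norm_nonneg x], hx⟩
      rw [hqdef, Set.indicator_of_mem hQx]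
    · rw [hz1 (t, x) ht0 (not_le.1 hx)]
      simp
  calc ENNReal.ofReal (R / 4) * X = ∫⁻ _t in J, X := by
        rw [setLIntegral_const, mul_comm, hJvol]
    _ ≤ ∫⁻ t in J, ∫⁻ x, q (t, x) := setLIntegral_mono' measurableSet_Icc step
    _ ≤ ∫⁻ t, ∫⁻ x, q (t, x) := setLIntegral_le_lintegral _ _
    _ = _ := hfull

/-- The `L¹` form of the lower bound, `R^{1 + m/2} ∫ ∂ₜw(0, ·) ≲ ‖∂ₜw‖_{L¹}` on the layer, with a
constant depending only on `m` and `r₀`. -/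
lemma exists_L1_bound (m : ℕ) {r₀ : ℝ} (hr₀ : 0 < r₀) :
    ∃ C > (0 : ℝ), ∀ (w : STn (m + 1) → ℝ) (T : ℝ), ContDiff ℝ 2 w →
      (∀ z : STn (m + 1), 0 ≤ z.1 → z.1 + r₀ < ‖z.2‖ → w z = 0) →
      (∀ z : STn (m + 1), 0 < z.1 → z.1 < T → 0 ≤ boxD w z) →
      0 < ∫ x, dtD w (0, x) → ∀ R : ℝ, 1 ≤ R → R < T →
        R * √R ^ m * ∫ x, dtD w (0, x) ≤
          C * ∫ z in coneLayer (m + 1) r₀ (30 * r₀) R, |dtD w z| := by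
  -- a cutoff equal to `1` on `[-2r₀, 2r₀]` and vanishing outside `[-3r₀, 3r₀]`
  let b : ContDiffBump (0 : ℝ) := ⟨2 * r₀, 3 * r₀, by positivity, by linarith⟩
  have hb : ContDiff ℝ 2 b := b.contDiff
  have hBz : ∀ s, 3 * r₀ < |s| → b s = 0 := by
    intro s hs
    refine b.zero_of_le_dist ?_
    rw [Real.dist_eq, sub_zero]
    exact hs.le
  have hB1 : ∀ s, |s| < 2 * r₀ → b s = 1 := by
    intro s hs
    refine b.one_of_mem_closedBall ?_
    rw [Metric.mem_closedBall, Real.dist_eq, sub_zero]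
    exact hs.le
  obtain ⟨M, hM⟩ := (b.hasCompactSupport.deriv).exists_bound_of_continuous
    (hb.continuous_deriv one_le_two)
  have hM0 : 0 ≤ M := (norm_nonneg _).trans (hM 0)
  set c1 : ℝ := (2 * (1 / (m + 1))) ^ m
  have hc1 : 0 < c1 := by positivity
  set C1 : ℝ := 12 * ((2 * √(27 * r₀ / 2)) ^ m * (1 + M * (4 * r₀))) / c1
  have hC1 : 0 < C1 := by positivity
  set C2 : ℝ := 4 * √(30 * r₀) ^ m
  have hC2 : 0 < C2 := by positivity
  refine ⟨C1 + C2, by positivity, fun w T hw hsupp hbox hX R hR hRT => ?_⟩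
  have hR0 : 0 < R := by linarith
  have hsR : 0 < √R := Real.sqrt_pos.2 hR0
  have hw1 : ContDiff ℝ 1 (dtD w) := contDiff_dirD _ (by simpa [one_add_one_eq_two] using hw)
  set X := ∫ x, dtD w (0, x)
  set Q := coneLayer (m + 1) r₀ (30 * r₀) R
  set I := ∫ z in Q, |dtD w z|
  have hI0 : 0 ≤ I := integral_nonneg fun _ => abs_nonneg _
  have hint : IntegrableOn (dtD w) Q :=
    hw1.continuous.continuousOn.integrableOn_compact (isCompact_coneLayer _ _ _ _)
  have hIe : ∫⁻ z in Q, ‖dtD w z‖ₑ = ENNReal.ofReal I :=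
    (ofReal_integral_norm_eq_lintegral_enorm hint).symm
  rcases le_total R (30 * r₀) with hRr | hRr
  · have h := small_time_bound m hw hr₀ hsupp hbox hR0 hRr hRT
    rw [hIe, ← ENNReal.ofReal_mul (by positivity), ENNReal.ofReal_le_ofReal_iff hI0] at h
    have h2 : √R ^ m ≤ √(30 * r₀) ^ m := by gcongr
    calc R * √R ^ m * X = 4 * √R ^ m * (R / 4 * X) := by ring
      _ ≤ 4 * √(30 * r₀) ^ m * I := by gcongr
      _ ≤ (C1 + C2) * I := by
        refine mul_le_mul_of_nonneg_right ?_ hI0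
        linarith
  · have h := averaged_bound m hw hr₀ hsupp hbox hb (fun _ => b.nonneg) (fun _ => b.le_one)
      hB1 hBz hM hRr hRT
    have hone : (1 : ℝ≥0∞) + ENNReal.ofReal M * ENNReal.ofReal (4 * r₀) =
        ENNReal.ofReal (1 + M * (4 * r₀)) := by
      rw [ENNReal.ofReal_add zero_le_one (by positivity), ENNReal.ofReal_one,
        ENNReal.ofReal_mul hM0]
    rw [hIe, hone, ← ENNReal.ofReal_mul (by positivity), ← ENNReal.ofReal_mul (by positivity),
      ← ENNReal.ofReal_mul (by positivity), ← ENNReal.ofReal_mul (by positivity),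
      ENNReal.ofReal_le_ofReal_iff (by positivity)] at h
    have hsq : √(27 * r₀ / (2 * R)) = √(27 * r₀ / 2) / √R := by
      rw [← Real.sqrt_div' _ hR0.le]
      congr 1
      field_simp
    have h3 : R * √R ^ m * X ≤ C1 * I := by
      rw [hsq] at h
      calc R * √R ^ m * X = 12 * √R ^ m / c1 * (R / 12 * (c1 * X)) := by field_simp
        _ ≤ 12 * √R ^ m / c1 *
            ((2 * (√(27 * r₀ / 2) / √R)) ^ m * ((1 + M * (4 * r₀)) * I)) := by gcongr
        _ = C1 * I := by
          simp only [C1]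
          rw [← mul_div_assoc, div_pow]
          field_simp
    refine h3.trans (mul_le_mul_of_nonneg_right ?_ hI0)
    linarith

/-- Young's inequality with a free parameter, in a crude form. -/
lemma young_le {q : ℝ} (hq : 1 < q) {a l : ℝ} (ha : 0 ≤ a) (hl : 0 < l) :
    a ≤ l + l ^ (1 - q) * a ^ q := by
  rcases le_total a l with h | h
  · have : 0 ≤ l ^ (1 - q) * a ^ q := by positivity
    linarith
  · have ha0 : 0 < a := hl.trans_le h
    have h1 : a ^ (1 - q) ≤ l ^ (1 - q) :=
      Real.rpow_le_rpow_of_nonpos hl h (by linarith)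
    have h2 : a = a ^ (1 - q) * a ^ q := by
      rw [← Real.rpow_add ha0]; simp
    have h3 : a ^ (1 - q) * a ^ q ≤ l ^ (1 - q) * a ^ q := by gcongr
    linarith

/-- The exponent bookkeeping: an `L¹` lower bound on a set of measure at most `C' R^{m+1}` turns
into an `L^q` lower bound. -/
lemma Lq_of_L1 (m : ℕ) {q : ℝ} {X R I V K C C' : ℝ} (hX : 0 < X) (hR : 0 < R)
    (hC : 0 < C) (hC' : 0 < C') (hV : V ≤ C' * R ^ (m + 1)) (hI : R * √R ^ m * X ≤ C * I)
    (hK : ∀ l > (0 : ℝ), I ≤ l * V + l ^ (1 - q) * K) :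
    ((2 * C * C') ^ (1 - q) / (2 * C)) * X ^ q * R ^ (((m : ℝ) + 1) - m * q / 2) ≤ K := by
  have hs : √R ^ m = R ^ ((m : ℝ) / 2) := by
    rw [Real.sqrt_eq_rpow, ← Real.rpow_natCast, ← Real.rpow_mul hR.le]
    congr 1; ring
  have hsR : 0 < √R := Real.sqrt_pos.2 hR
  set S := √R ^ m with hS
  have hS0 : 0 < S := by positivity
  have hSS : S * S = R ^ m := by
    rw [hS, ← mul_pow, Real.mul_self_sqrt hR.le]
  set l := X / (2 * C * C' * S) with hldef
  have hl : 0 < l := by positivity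
  have h1 := hK l hl
  have h2 : C * (l * V) ≤ R * S * X / 2 := by
    calc C * (l * V) ≤ C * (l * (C' * R ^ (m + 1))) := by gcongr
      _ = R * S * X / 2 := by
        rw [pow_succ, ← hSS, hldef]
        field_simp
  have h3 : R * S * X / 2 ≤ C * (l ^ (1 - q) * K) := by nlinarith
  have h4 : l ^ (q - 1) * (R * S * X / (2 * C)) ≤ K := by
    have h5 : R * S * X / (2 * C) ≤ l ^ (1 - q) * K := by
      rw [div_le_iff₀ (by positivity)]; linarith
    calc l ^ (q - 1) * (R * S * X / (2 * C)) ≤ l ^ (q - 1) * (l ^ (1 - q) * K) := by gcongr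
      _ = K := by
        rw [← mul_assoc, ← Real.rpow_add hl]; simp
  refine le_trans (le_of_eq ?_) h4
  have h6 : l ^ (q - 1) = X ^ (q - 1) * (2 * C * C') ^ (1 - q) * S ^ (1 - q) := by
    rw [hldef, Real.div_rpow hX.le (by positivity), Real.mul_rpow (by positivity) hS0.le,
      div_eq_mul_inv, mul_inv, ← Real.rpow_neg (by positivity), ← Real.rpow_neg hS0.le]
    ring_nf
  have h7 : X ^ q = X ^ (q - 1) * X := by
    rw [← Real.rpow_add_one hX.ne']; simp
  have h8 : R ^ (((m : ℝ) + 1) - m * q / 2) = R * S * S ^ (1 - q) := by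
    rw [hs, ← Real.rpow_mul hR.le, ← Real.rpow_one_add' hR.le (by positivity),
      ← Real.rpow_add hR]
    congr 1; ring
  rw [h6, h7, h8]
  field_simp
/-- The lower bound lemma of Ikeda–Sobajima–Wakasa (Lemma 2.3). -/
theorem lower_bound_lemma (n : ℕ) (hn : 2 ≤ n) (qbar : ℝ) (hqbar : 1 < qbar)
    (k : ℕ) (hk : 2 * (qbar / (qbar - 1)) ≤ (k : ℝ))
    (r₀ : ℝ) (hr₀ : 0 < r₀)
    (η : ℝ → ℝ) (hηsm : ContDiff ℝ ∞ η) (hmono : AntitoneOn η (Set.Ici 0))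
    (hη1 : ∀ s : ℝ, s ≤ 1/2 → η s = 1) (hη0 : ∀ s : ℝ, 1 ≤ s → η s = 0)
    (hstrict : StrictAntiOn η (Set.Ioo (1/2 : ℝ) 1)) :
    ∃ δ > (0 : ℝ), ∀ T ε : ℝ, 1 < T → 0 < ε →
      ∀ f g : Spc n → ℝ, ContDiff ℝ ∞ f → HasCompactSupport f →
        ContDiff ℝ ∞ g → HasCompactSupport g → 0 < (∫ x, g x) →
      ∀ w : STn n → ℝ, ContDiff ℝ 2 w →
        (∀ x, w (0, x) = ε * f x) → (∀ x, dtD w (0, x) = ε * g x) →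
        (∀ z : STn n, 0 ≤ z.1 → z.1 + r₀ < ‖z.2‖ → w z = 0) →
        (∀ z : STn n, 0 < z.1 → z.1 < T → 0 ≤ boxD w z) →
        ∀ R : ℝ, 1 ≤ R → R < T →
          δ * (ε * ∫ x, g x) ^ qbar * R ^ ((n : ℝ) - ((n : ℝ) - 1) * qbar / 2) ≤
            ∫ z in Set.Ioo 0 T ×ˢ (Set.univ : Set (Spc n)),
              |dtD w z| ^ qbar * (if z.1 / R < 1/2 then 0 else η (z.1 / R)) ^ k := by
  obtain ⟨m, rfl⟩ : ∃ m, n = m + 1 := ⟨n - 1, by omega⟩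
  obtain ⟨C, hC, hL1⟩ := exists_L1_bound m hr₀
  set C' : ℝ := (30 * r₀ + r₀) * (m + 1) * (1 + r₀) ^ m *
    volume.real (Metric.ball (0 : Spc (m + 1)) 1) with hC'def
  have hV0 : 0 < volume.real (Metric.ball (0 : Spc (m + 1)) 1) :=
    ENNReal.toReal_pos (Metric.measure_ball_pos _ _ one_pos).ne' measure_ball_lt_top.ne
  have hC' : 0 < C' := by positivity
  have hη34 : 0 < η (3 / 4) := by
    have h1 : η (7 / 8) < η (3 / 4) :=
      hstrict (by constructor <;> norm_num) (by constructor <;> norm_num) (by norm_num)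
    have h2 : η 1 ≤ η (7 / 8) :=
      hmono (by simp; norm_num) (by simp) (by norm_num)
    rw [hη0 1 le_rfl] at h2
    linarith
  have hηnn : ∀ s, 0 ≤ η s := by
    intro s
    rcases le_total s (1 / 2) with h | h
    · rw [hη1 s h]; exact zero_le_one
    · rcases le_total s 1 with h' | h'
      · rw [← hη0 1 le_rfl]
        exact hmono (Set.mem_Ici.2 (by linarith)) (by simp) h'
      · rw [hη0 s h']
  have hηle : ∀ s, η s ≤ 1 := by
    intro s
    rcases le_total s (1 / 2) with h | h
    · exact (hη1 s h).le
    · rw [← hη1 (1 / 2) le_rfl]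
      exact hmono (by simp) (Set.mem_Ici.2 (by linarith)) h
  refine ⟨η (3 / 4) ^ k * ((2 * C * C') ^ (1 - qbar) / (2 * C)), by positivity, ?_⟩
  intro T ε hT hε f g _ _ _ _ hg w hw _ hdt hsupp hbox R hR hRT
  have hR0 : 0 < R := by linarith
  have hw1 : ContDiff ℝ 1 (dtD w) := contDiff_dirD _ (by simpa [one_add_one_eq_two] using hw)
  have hcont : Continuous (dtD w) := hw1.continuous
  have hz1 : ∀ z : STn (m + 1), 0 ≤ z.1 → z.1 + r₀ < ‖z.2‖ → dtD w z = 0 :=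
    eq_zero_of_continuous hcont (dirD_eq_zero_s3 _ fun z h => hsupp z h.le)
  have hXeq : ∫ x, dtD w (0, x) = ε * ∫ x, g x := by
    simp_rw [hdt]
    exact integral_const_mul _ _
  have hX : 0 < ε * ∫ x, g x := by positivity
  have hI := hL1 w T hw hsupp hbox (hXeq ▸ hX) R hR hRT
  rw [hXeq] at hI
  set Q := coneLayer (m + 1) r₀ (30 * r₀) R
  have hQc : IsCompact Q := isCompact_coneLayer _ _ _ _
  have hQm : MeasurableSet Q := (isClosed_coneLayer _ _ _ _).measurableSet
  have hcontq : Continuous fun z => |dtD w z| ^ qbar :=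
    hcont.abs.rpow_const fun _ => Or.inr (by linarith)
  have hintq : IntegrableOn (fun z => |dtD w z| ^ qbar) Q :=
    hcontq.continuousOn.integrableOn_compact hQc
  have hYoung : ∀ l > (0 : ℝ), ∫ z in Q, |dtD w z| ≤
      l * volume.real Q + l ^ (1 - qbar) * ∫ z in Q, |dtD w z| ^ qbar := by
    intro l hl
    have hconst : IntegrableOn (fun _ : STn (m + 1) => l) Q :=
      integrableOn_const hQc.measure_lt_top.ne
    calc ∫ z in Q, |dtD w z| ≤ ∫ z in Q, (l + l ^ (1 - qbar) * |dtD w z| ^ qbar) :=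
          setIntegral_mono (hcont.abs.continuousOn.integrableOn_compact hQc)
            (hconst.add (hintq.const_mul _)) fun z => young_le hqbar (abs_nonneg _) hl
      _ = _ := by
          rw [integral_add hconst (hintq.const_mul _), integral_const_mul, setIntegral_const,
            smul_eq_mul, mul_comm l]
  have hK := Lq_of_L1 m hX hR0 hC hC' (volume_coneLayer_le m hr₀ (by positivity) hR) hI hYoung
  -- passage from the layer to the weighted integral over the whole slab
  set F : STn (m + 1) → ℝ := fun z =>
    |dtD w z| ^ qbar * (if z.1 / R < 1/2 then 0 else η (z.1 / R)) ^ k with hF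
  have hψ0 : ∀ z : STn (m + 1), 0 ≤ (if z.1 / R < 1/2 then 0 else η (z.1 / R)) := by
    intro z
    split_ifs
    · exact le_rfl
    · exact hηnn _
  have hψ1 : ∀ z : STn (m + 1), (if z.1 / R < 1/2 then 0 else η (z.1 / R)) ≤ 1 := by
    intro z
    split_ifs
    · exact zero_le_one
    · exact hηle _
  have hF0 : ∀ z, 0 ≤ F z := fun z => mul_nonneg (by positivity) (pow_nonneg (hψ0 z) k)
  have hFm : Measurable F := by
    refine hcontq.measurable.mul (Measurable.pow_const ?_ k)
    refine Measurable.ite (measurableSet_lt (by fun_prop) measurable_const) measurable_const ?_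
    exact hηsm.continuous.measurable.comp (by fun_prop)
  set U : Set (STn (m + 1)) := Set.Icc 0 T ×ˢ Metric.closedBall 0 (T + r₀)
  have hUc : IsCompact U := isCompact_Icc.prod (isCompact_closedBall _ _)
  have hUm : MeasurableSet U := measurableSet_Icc.prod Metric.isClosed_closedBall.measurableSet
  have hslab : MeasurableSet (Set.Ioo 0 T ×ˢ (Set.univ : Set (Spc (m + 1)))) :=
    measurableSet_Ioo.prod MeasurableSet.univ
  have hFU : IntegrableOn F U := by
    refine Integrable.mono' (hcontq.continuousOn.integrableOn_compact hUc)
      hFm.aestronglyMeasurable (Filter.Eventually.of_forall fun z => ?_)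
    rw [Real.norm_of_nonneg (hF0 z)]
    exact mul_le_of_le_one_right (by positivity) (pow_le_one₀ (hψ0 z) (hψ1 z))
  have hFint : IntegrableOn F (Set.Ioo 0 T ×ˢ (Set.univ : Set (Spc (m + 1)))) := by
    refine IntegrableOn.of_forall_sdiff_eq_zero hFU hslab ?_
    rintro ⟨s, x⟩ ⟨⟨hs, -⟩, hnU⟩
    have hs' : 0 < s ∧ s < T := hs
    have hx : s + r₀ < ‖x‖ := by
      by_contra hcon
      refine hnU ⟨⟨hs'.1.le, hs'.2.le⟩, ?_⟩
      rw [mem_closedBall_zero_iff]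
      simp only
      linarith [hs'.2]
    simp only [hF]
    rw [hz1 (s, x) hs'.1.le hx, abs_zero, Real.zero_rpow (by linarith), zero_mul]
  have hQsub : Q ⊆ Set.Ioo 0 T ×ˢ (Set.univ : Set (Spc (m + 1))) := by
    rintro ⟨s, x⟩ ⟨h1, h2, -, -⟩
    simp only at h1 h2
    exact ⟨⟨by simp only; linarith, by simp only; linarith⟩, Set.mem_univ _⟩
  have hFQ : ∀ z ∈ Q, η (3 / 4) ^ k * |dtD w z| ^ qbar ≤ F z := by
    rintro z ⟨h1, h2, -, -⟩
    have h3 : 1 / 2 ≤ z.1 / R := by rw [le_div_iff₀ hR0]; linarith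
    have h4 : z.1 / R ≤ 3 / 4 := by rw [div_le_iff₀ hR0]; linarith
    have h5 : η (3 / 4) ≤ η (z.1 / R) :=
      hmono (Set.mem_Ici.2 (by linarith)) (Set.mem_Ici.2 (by norm_num)) h4
    simp only [hF]
    rw [if_neg (not_lt.2 h3), mul_comm]
    gcongr
  have hfin : η (3 / 4) ^ k * ∫ z in Q, |dtD w z| ^ qbar ≤
      ∫ z in Set.Ioo 0 T ×ˢ (Set.univ : Set (Spc (m + 1))), F z := by
    rw [← integral_const_mul]
    refine (setIntegral_mono_on (hintq.const_mul _) (hFint.mono_set hQsub) hQm hFQ).trans ?_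
    exact setIntegral_mono_set hFint (Filter.Eventually.of_forall hF0) hQsub.eventuallyLE
  refine le_trans (le_of_eq ?_) ((mul_le_mul_of_nonneg_left hK (by positivity)).trans hfin)
  push_cast
  rw [add_sub_cancel_right]
  ring
end

section
/- Let n ≥ 2 and let 2 ≤ p < q < ∞ satisfy 1/p − 1/q ≤ 1/n. Then there exists a constant C > 0 such that for every t ≥ 0 and every C^∞ function v on [0,∞) × ℝⁿ which is Schwartz in the x-variable, ‖χ_{1,t} v(t,·)‖_{L^q(ℝⁿ)} ≤ C (1+t)^{−n(1/p−1/q)} Σ_{|α| ≤ 1} ‖(Γ^α v)(t,·)‖_{L^p(ℝⁿ)}. -/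
/-!
On the region `|x| ≤ (2/3)(1+t)` the Klainerman fields control `(1+t) ∂_j` pointwise: for `t ≤ 4`
because `∂_j` is itself one of the fields, and for `t ≥ 4` through the identity
`(t² - |x|²) ∂_j = t L_j - x_j S - ∑_k x_k Ω_{kj}`, where `t² - |x|²` is comparable to `t²`
(`weight_mul_abs_dxD_le`).

Put `R = 1 + t` and let `φ` be a bump function equal to `1` on the ball of radius `1/2` and supported
in the ball of radius `2/3`. The function `u y = φ y * v (t, R y)` has support in a fixed ball, so
the Gagliardo–Nirenberg–Sobolev inequality with exponents `p' ↦ q`, `1/p' = 1/n + 1/q`, followed by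
Hölder on that ball (`p' ≤ p` is exactly the gap condition), bounds `‖u‖_q` by `‖∇u‖_p`
(`sobolev_fixed_ball`). The chain rule produces the factor `R` in front of `∇_x v`, which is absorbed
by the pointwise estimate. Undoing the dilation on both sides (`eLpNorm_comp_dilation`) gives the
power `R ^ (n/q - n/p)`.
-/

open MeasureTheory Real ENNReal FourierTransform
open scoped ContDiff

/-! ### Dilations and the Sobolev inequality on a fixed ball -/

/-- The `L^p` norm of a dilate. -/
lemma eLpNorm_comp_dilation {n : ℕ} {f : Spc n → ℝ} (hf : StronglyMeasurable f) {p R : ℝ}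
    (hp : 0 < p) (hR : 0 < R) :
    eLpNorm (fun y => f (R • y)) (ENNReal.ofReal p) volume =
      ENNReal.ofReal (R ^ (-((n : ℝ) / p))) * eLpNorm f (ENNReal.ofReal p) volume := by
  have h1 : eLpNorm f (ENNReal.ofReal p) (Measure.map (fun y : Spc n => R • y) volume) =
      eLpNorm (f ∘ fun y => R • y) (ENNReal.ofReal p) volume :=
    eLpNorm_map_measure hf.aestronglyMeasurable (by fun_prop)
  have h2 := Measure.map_addHaar_smul (volume : Measure (Spc n)) hR.ne'
  have h3 : (fun y => f (R • y)) = f ∘ fun y => R • y := rfl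
  rw [h3, ← h1, h2, eLpNorm_smul_measure_of_ne_top ENNReal.ofReal_ne_top, smul_eq_mul]
  congr 1
  rw [finrank_euclideanSpace_fin, abs_of_pos (by positivity),
    ENNReal.ofReal_rpow_of_pos (by positivity)]
  congr 1
  rw [← Real.rpow_natCast, ← Real.rpow_neg hR.le, ← Real.rpow_mul hR.le]
  congr 1
  rw [ENNReal.toReal_div, ENNReal.toReal_ofReal hp.le]
  simp
  ring

/-- Sobolev inequality `‖u‖_q ≤ C ‖∇u‖_p` for `C¹` functions supported in a fixed ball; the support
condition allows the full range `1/p ≤ 1/n + 1/q`, with no upper bound on `p`. -/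
lemma sobolev_fixed_ball (n : ℕ) (hn : 2 ≤ n) (p q : ℝ) (hp : 2 ≤ p) (hpq : p < q)
    (hgap : 1/p - 1/q ≤ 1/(n : ℝ)) :
    ∃ C : NNReal, ∀ u : Spc n → ℝ, ContDiff ℝ 1 u →
      Function.support u ⊆ Metric.closedBall 0 (2/3) →
      eLpNorm u (ENNReal.ofReal q) volume ≤
        C * eLpNorm (fderiv ℝ u) (ENNReal.ofReal p) volume := by
  have hn0 : (2 : ℝ) ≤ n := by exact_mod_cast hn
  have hq : 2 < q := by linarith
  have hninv : 1 / (n : ℝ) ≤ 1 / 2 := one_div_le_one_div_of_le (by norm_num) hn0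
  have hqinv : 1 / q ≤ 1 / 2 := one_div_le_one_div_of_le (by norm_num) hq.le
  -- the Sobolev exponent `r` with `1/r = 1/n + 1/q`
  set r : ℝ := (1 / (n : ℝ) + 1 / q)⁻¹ with hr
  have hs : 0 < 1 / (n : ℝ) + 1 / q := by positivity
  have hr1 : 1 ≤ r := (one_le_inv₀ hs).2 (by linarith)
  have hrp : r ≤ p := by
    rw [hr]
    apply inv_le_of_inv_le₀ (by linarith)
    rw [inv_eq_one_div]; linarith
  set B : Set (Spc n) := Metric.closedBall 0 (2/3)
  have hBfin : volume B ≠ ⊤ := (isCompact_closedBall _ _).measure_lt_top.ne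
  have he : 0 ≤ 1 / r - 1 / p := by
    have := one_div_le_one_div_of_le (by linarith : 0 < r) hrp
    linarith
  have hD : volume B ^ (1 / r - 1 / p) ≠ ⊤ := (ENNReal.rpow_lt_top_of_nonneg he hBfin).ne
  refine ⟨SNormLESNormFDerivOfEqConst ℝ (volume : Measure (Spc n)) r.toNNReal *
    (volume B ^ (1 / r - 1 / p)).toNNReal, fun u hu hsupp => ?_⟩
  have hts : tsupport u ⊆ B := closure_minimal hsupp Metric.isClosed_closedBall
  have hcs : HasCompactSupport u :=
    HasCompactSupport.of_support_subset_isCompact (isCompact_closedBall _ _) hsupp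
  have hfin : Module.finrank ℝ (Spc n) = n := finrank_euclideanSpace_fin
  have hS := eLpNorm_le_eLpNorm_fderiv_of_eq (F := ℝ) (volume : Measure (Spc n)) hu hcs
    (p := r.toNNReal) (p' := q.toNNReal) (by simpa using hr1) (by rw [hfin]; omega)
    (by
      rw [hfin, NNReal.coe_inv, Real.coe_toNNReal _ (by linarith),
        Real.coe_toNNReal _ (by linarith), hr]
      simp)
  have hsupp' : Function.support (fderiv ℝ u) ⊆ B := (support_fderiv_subset ℝ).trans hts
  have hH : eLpNorm (fderiv ℝ u) (ENNReal.ofReal r) volume ≤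
      eLpNorm (fderiv ℝ u) (ENNReal.ofReal p) volume * volume B ^ (1 / r - 1 / p) := by
    have hres : ∀ s : ℝ≥0∞, eLpNorm (fderiv ℝ u) s (volume.restrict B) =
        eLpNorm (fderiv ℝ u) s volume := fun s =>
      eLpNorm_restrict_eq_of_support_subset (f := fderiv ℝ u) hsupp'
    rw [← hres, ← hres]
    have := eLpNorm_le_eLpNorm_mul_rpow_measure_univ (μ := volume.restrict B)
      (ENNReal.ofReal_le_ofReal hrp)
      (hu.continuous_fderiv one_ne_zero).aestronglyMeasurable
    rwa [ENNReal.toReal_ofReal (by linarith), ENNReal.toReal_ofReal (by linarith),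
      Measure.restrict_apply_univ] at this
  calc eLpNorm u (ENNReal.ofReal q) volume
      ≤ SNormLESNormFDerivOfEqConst ℝ (volume : Measure (Spc n)) r.toNNReal *
        eLpNorm (fderiv ℝ u) (ENNReal.ofReal r) volume := hS
    _ ≤ _ := mul_le_mul_right hH _
    _ = _ := by
      rw [ENNReal.coe_mul, ENNReal.coe_toNNReal hD]; ring

/-! ### Pointwise control of spatial derivatives by Klainerman fields -/

/-- The identity `(t² - |x|²) ∂_j = t L_j - x_j S - ∑_k x_k Ω_{kj}`. -/
lemma sq_sub_sq_mul_dxD {n : ℕ} (v : STn n → ℝ) (t : ℝ) (x : Spc n) (j : Fin n) :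
    (t ^ 2 - ‖x‖ ^ 2) * dxD j v (t, x) =
      t * LD j v (t, x) - x j * SD v (t, x) - ∑ k, x k * RotD k j v (t, x) := by
  have h : ‖x‖ ^ 2 = ∑ k, x k ^ 2 := by
    rw [EuclideanSpace.norm_sq_eq]; simp
  have h2 : ∑ k, x k * RotD k j v (t, x) =
      (∑ k, x k ^ 2) * dxD j v (t, x) - x j * ∑ k, x k * dxD k v (t, x) := by
    rw [Finset.sum_mul, Finset.mul_sum, ← Finset.sum_sub_distrib]
    refine Finset.sum_congr rfl fun k _ => ?_
    simp only [RotD]; ring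
  rw [h2, h]
  simp only [LD, SD]
  ring

/-- Inside `|x| ≤ (2/3)(1+t)` the Klainerman fields control `(1+t) ∂_j`. -/
lemma weight_mul_abs_dxD_le {n : ℕ} (v : STn n → ℝ) {t : ℝ} (ht : 0 ≤ t) {x : Spc n}
    (hx : ‖x‖ ≤ 2 / 3 * (1 + t)) (j : Fin n) :
    (1 + t) * |dxD j v (t, x)| ≤ 5 * (n + 2) * ∑ a, |Gop a v (t, x)| := by
  set G := ∑ a, |Gop a v (t, x)|
  have hG : ∀ a, |Gop a v (t, x)| ≤ G := fun a =>
    Finset.single_le_sum (f := fun a => |Gop a v (t, x)|) (fun _ _ => abs_nonneg _)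
      (Finset.mem_univ a)
  have hG0 : 0 ≤ G := Finset.sum_nonneg fun _ _ => abs_nonneg _
  have hn : (0 : ℝ) ≤ n := Nat.cast_nonneg n
  have hnG : 0 ≤ n * G := mul_nonneg hn hG0
  have hd0 := abs_nonneg (dxD j v (t, x))
  rcases le_total t 4 with h4 | h4
  · have h1 : |dxD j v (t, x)| ≤ G := hG (Sum.inl (some j))
    nlinarith
  · have hxt : ‖x‖ ≤ 5 / 6 * t := by linarith
    have hxk : ∀ k, |x k| ≤ t := fun k => by
      have := PiLp.norm_apply_le x k
      rw [Real.norm_eq_abs] at this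
      linarith
    have hL : |t * LD j v (t, x)| ≤ t * G := by
      rw [abs_mul, abs_of_nonneg ht]
      exact mul_le_mul_of_nonneg_left (hG (Sum.inr (Sum.inl j))) ht
    have hS : |x j * SD v (t, x)| ≤ t * G := by
      rw [abs_mul]
      exact mul_le_mul (hxk j) (hG (Sum.inr (Sum.inr (Sum.inr ())))) (abs_nonneg _) ht
    have hRot : |∑ k, x k * RotD k j v (t, x)| ≤ n * (t * G) := by
      refine (Finset.abs_sum_le_sum_abs _ _).trans ?_
      refine (Finset.sum_le_card_nsmul _ _ (t * G) fun k _ => ?_).trans ?_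
      · rw [abs_mul]
        exact mul_le_mul (hxk k) (hG (Sum.inr (Sum.inr (Sum.inl (k, j))))) (abs_nonneg _) ht
      · simp
    have hx2 : ‖x‖ ^ 2 ≤ (5 / 6 * t) ^ 2 := pow_le_pow_left₀ (norm_nonneg _) hxt 2
    have hpos : 11 / 36 * t ^ 2 ≤ t ^ 2 - ‖x‖ ^ 2 := by nlinarith
    have key : 11 / 36 * t ^ 2 * |dxD j v (t, x)| ≤ (n + 2) * (t * G) := by
      calc 11 / 36 * t ^ 2 * |dxD j v (t, x)|
          ≤ (t ^ 2 - ‖x‖ ^ 2) * |dxD j v (t, x)| := mul_le_mul_of_nonneg_right hpos hd0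
        _ = |(t ^ 2 - ‖x‖ ^ 2) * dxD j v (t, x)| := by
          rw [abs_mul, abs_of_nonneg (le_trans (by positivity) hpos)]
        _ ≤ |t * LD j v (t, x)| + |x j * SD v (t, x)| + |∑ k, x k * RotD k j v (t, x)| := by
          rw [sq_sub_sq_mul_dxD]
          exact (abs_sub _ _).trans (add_le_add_left (abs_sub _ _) _)
        _ ≤ (n + 2) * (t * G) := by linarith
    have key2 : 11 / 36 * (t * |dxD j v (t, x)|) ≤ (n + 2) * G := by
      have htpos : 0 < t := by linarith
      refine le_of_mul_le_mul_left ?_ htpos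
      calc t * (11 / 36 * (t * |dxD j v (t, x)|)) = 11 / 36 * t ^ 2 * |dxD j v (t, x)| := by ring
        _ ≤ _ := key
        _ = _ := by ring
    nlinarith

/-! ### Words of length at most one and the localized function -/

/-- The family `(Γ^α v)_{|α| ≤ 1}`, with `none` standing for the empty word. -/
noncomputable def lowOrder {n : ℕ} (v : STn n → ℝ) : Option (GIdx n) → STn n → ℝ
  | none => v
  | some a => Gop a v

lemma SumW_one_eq {n : ℕ} (Φ : (STn n → ℝ) → ℝ≥0∞) (v : STn n → ℝ) :
    SumW 1 Φ v = ∑ o, Φ (lowOrder v o) := by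
  rw [SumW, Finset.sum_range_succ, Finset.sum_range_one, Fintype.sum_option]
  congr 1
  · simp [GwL, lowOrder]
  · rw [← (Equiv.funUnique (Fin 1) (GIdx n)).sum_comp]
    refine Finset.sum_congr rfl fun w _ => ?_
    simp [GwL, lowOrder, List.ofFn_succ]

lemma continuous_lowOrder {n : ℕ} {v : STn n → ℝ} (hv : ContDiff ℝ ∞ v) (o : Option (GIdx n)) :
    Continuous (lowOrder v o) := by
  have hd : ∀ w : STn n, Continuous (dirD w v) := fun w =>
    (hv.continuous_fderiv (by simp)).clm_apply continuous_const
  have ht : Continuous (dtD v) := hd _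
  have hx : ∀ j, Continuous (dxD j v) := fun j => hd _
  match o with
  | none => exact hv.continuous
  | some (Sum.inl none) => exact ht
  | some (Sum.inl (some j)) => exact hx j
  | some (Sum.inr (Sum.inl j)) =>
    have := hx j
    change Continuous (LD j v)
    unfold LD
    fun_prop
  | some (Sum.inr (Sum.inr (Sum.inl (j, k)))) =>
    have := hx j
    have := hx k
    change Continuous (RotD j k v)
    unfold RotD
    fun_prop
  | some (Sum.inr (Sum.inr (Sum.inr _))) =>
    change Continuous (SD v)
    unfold SD
    fun_prop

lemma norm_functional_le_sum {n : ℕ} (l : Spc n →L[ℝ] ℝ) :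
    ‖l‖ ≤ ∑ j, |l (EuclideanSpace.single j 1)| := by
  refine l.opNorm_le_bound (Finset.sum_nonneg fun _ _ => abs_nonneg _) fun x => ?_
  have hx : x = ∑ j, x j • EuclideanSpace.single j (1 : ℝ) := by
    have := (EuclideanSpace.basisFun (Fin n) ℝ).sum_repr x
    simpa using this.symm
  conv_lhs => rw [hx]
  rw [map_sum, Finset.sum_mul]
  refine (norm_sum_le _ _).trans (Finset.sum_le_sum fun j _ => ?_)
  rw [map_smul, smul_eq_mul, norm_mul, mul_comm, Real.norm_eq_abs (l _)]
  exact mul_le_mul_of_nonneg_left (PiLp.norm_apply_le x j) (abs_nonneg _)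

/-- The gradient of the localized dilate `y ↦ φ y * v (t, (1+t) y)` is controlled pointwise by the
functions `Γ^α v`, `|α| ≤ 1`, with a constant independent of `v` and `t`. -/
lemma norm_fderiv_localized_le {n : ℕ} (φ : ContDiffBump (0 : Spc n)) (hφ : φ.rOut = 2 / 3) :
    ∃ K : NNReal, ∀ v : STn n → ℝ, ContDiff ℝ ∞ v → ∀ t : ℝ, 0 ≤ t → ∀ y : Spc n,
      ‖fderiv ℝ (fun y => φ y * v (t, (1 + t) • y)) y‖ ≤
        K * ∑ o, |lowOrder v o (t, (1 + t) • y)| := by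
  have hφd : ContDiff ℝ 1 (φ : Spc n → ℝ) := φ.contDiff
  obtain ⟨M, hM⟩ := (hφd.continuous_fderiv one_ne_zero).bounded_above_of_compact_support
    (φ.hasCompactSupport.fderiv (𝕜 := ℝ))
  have hM0 : 0 ≤ M := (norm_nonneg _).trans (hM 0)
  refine ⟨⟨M + n * (5 * (n + 2)), by positivity⟩, fun v hv t ht y => ?_⟩
  change _ ≤ (M + n * (5 * (n + 2))) * _
  set R := 1 + t with hR
  have hR0 : 0 < R := by linarith
  have hsum0 : 0 ≤ ∑ o, |lowOrder v o (t, R • y)| := Finset.sum_nonneg fun _ _ => abs_nonneg _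
  by_cases hy : ‖y‖ ≤ 2 / 3
  · have hvd : HasFDerivAt v (fderiv ℝ v (t, R • y)) (t, R • y) :=
      (hv.differentiable (by simp) _).hasFDerivAt
    have hin : HasFDerivAt (fun y : Spc n => ((t, R • y) : STn n))
        ((0 : Spc n →L[ℝ] ℝ).prod (R • ContinuousLinearMap.id ℝ (Spc n))) y :=
      (hasFDerivAt_const t y).prodMk ((hasFDerivAt_id y).const_smul R)
    set l := (fderiv ℝ v (t, R • y)).comp
      ((0 : Spc n →L[ℝ] ℝ).prod (R • ContinuousLinearMap.id ℝ (Spc n))) with hl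
    have hcomp : HasFDerivAt (fun y : Spc n => v (t, R • y)) l y := HasFDerivAt.comp y hvd hin
    have hφy : HasFDerivAt φ (fderiv ℝ φ y) y :=
      (hφd.differentiable one_ne_zero y).hasFDerivAt
    have hmul : HasFDerivAt (fun y => φ y * v (t, R • y))
        (φ y • l + v (t, R • y) • fderiv ℝ φ y) y := hφy.mul hcomp
    rw [hmul.fderiv]
    have hl' : ∀ j, |l (EuclideanSpace.single j 1)| = R * |dxD j v (t, R • y)| := fun j => by
      have : l (EuclideanSpace.single j 1) = R * dxD j v (t, R • y) := by
        rw [hl, dxD, dirD, ← smul_eq_mul, ← map_smul]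
        simp
      rw [this, abs_mul, abs_of_pos hR0]
    have hx : ‖R • y‖ ≤ 2 / 3 * (1 + t) := by
      rw [norm_smul, Real.norm_eq_abs, abs_of_pos hR0, ← hR]
      nlinarith
    have hlb : ‖l‖ ≤ n * (5 * (n + 2)) * ∑ a, |Gop a v (t, R • y)| := by
      refine (norm_functional_le_sum l).trans ?_
      refine (Finset.sum_le_card_nsmul _ _ (5 * (n + 2) * ∑ a, |Gop a v (t, R • y)|)
        fun j _ => ?_).trans ?_
      · rw [hl']
        exact weight_mul_abs_dxD_le v ht hx j
      · simp [mul_assoc]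
    have hG0 : 0 ≤ ∑ a, |Gop a v (t, R • y)| := Finset.sum_nonneg fun _ _ => abs_nonneg _
    rw [Fintype.sum_option]
    simp only [lowOrder]
    calc _ ≤ ‖φ y • l‖ + ‖v (t, R • y) • fderiv ℝ φ y‖ := norm_add_le _ _
      _ ≤ 1 * ‖l‖ + |v (t, R • y)| * M := by
        rw [norm_smul, norm_smul, Real.norm_eq_abs, Real.norm_eq_abs, abs_of_nonneg φ.nonneg]
        gcongr
        · exact φ.le_one
        · exact hM y
      _ ≤ _ := by
        have h1 : 0 ≤ n * (5 * ((n : ℝ) + 2)) * |v (t, R • y)| := by positivity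
        have h2 := mul_nonneg hM0 hG0
        linarith
  · have h0 : fderiv ℝ (fun y => φ y * v (t, R • y)) y = 0 := by
      by_contra hne
      apply hy
      have h1 : y ∈ tsupport (fun y => φ y * v (t, R • y)) := support_fderiv_subset ℝ hne
      have h2 : y ∈ tsupport φ := tsupport_mul_subset_left h1
      rw [φ.tsupport_eq, hφ] at h2
      simpa using h2
    rw [h0, norm_zero]
    positivity

/-- Klainerman–Sobolev type inequality, part (i) of Lemma 3.2. -/
theorem klainerman_sobolev_i (n : ℕ) (hn : 2 ≤ n) (p q : ℝ) (hp : 2 ≤ p) (hpq : p < q)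
    (hgap : 1/p - 1/q ≤ 1/(n : ℝ)) :
    ∃ C > (0 : ℝ), ∀ v : STn n → ℝ, ContDiff ℝ ∞ v → SchwartzInX v → ∀ t : ℝ, 0 ≤ t →
      eLpNorm (Set.indicator {x : Spc n | ‖x‖ < (1 + t)/2} (fun x => v (t, x)))
          (ENNReal.ofReal q) volume ≤
        ENNReal.ofReal (C * (1 + t) ^ (-(n : ℝ) * (1/p - 1/q))) *
          SumW 1 (fun f => eLpNorm (fun x => f (t, x)) (ENNReal.ofReal p) volume) v := by
  obtain ⟨C, hC⟩ := sobolev_fixed_ball n hn p q hp hpq hgap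
  let φ : ContDiffBump (0 : Spc n) := ⟨1 / 2, 2 / 3, by norm_num, by norm_num⟩
  obtain ⟨K, hK⟩ := norm_fderiv_localized_le φ rfl
  -- `+ 1` makes the constant positive
  refine ⟨C * K + 1, by positivity, fun v hv _ t ht => ?_⟩
  set R := 1 + t with hR
  have hR0 : 0 < R := by linarith
  have hq0 : 0 < q := by linarith
  have hp0 : 0 < p := by linarith
  rw [SumW_one_eq]
  set N := ∑ o, eLpNorm (fun x => lowOrder v o (t, x)) (ENNReal.ofReal p) volume
  have hcont : ∀ o, Continuous fun x : Spc n => lowOrder v o (t, x) := fun o =>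
    (continuous_lowOrder hv o).comp (by fun_prop)
  set u : Spc n → ℝ := fun y => φ y * v (t, R • y)
  have hu : ContDiff ℝ 1 u := by
    refine φ.contDiff.mul ((hv.of_le (by simp)).comp ?_)
    fun_prop
  have husupp : Function.support u ⊆ Metric.closedBall 0 (2 / 3) := by
    refine (Function.support_mul_subset_left _ _).trans ?_
    rw [φ.support_eq]
    exact Metric.ball_subset_closedBall
  set f : Spc n → ℝ := Set.indicator {x : Spc n | ‖x‖ < R / 2} (fun x => v (t, x)) with hf
  have hfm : StronglyMeasurable f :=
    (hcont none).stronglyMeasurable.indicator (measurableSet_lt (by fun_prop) (by fun_prop))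
  have hfu : eLpNorm (fun y => f (R • y)) (ENNReal.ofReal q) volume ≤
      eLpNorm u (ENNReal.ofReal q) volume := by
    refine eLpNorm_mono fun y => ?_
    by_cases hy : ‖R • y‖ < R / 2
    · have h1 : φ y = 1 := by
        apply φ.one_of_mem_closedBall
        rw [norm_smul, Real.norm_eq_abs, abs_of_pos hR0] at hy
        rw [mem_closedBall_zero_iff]
        change ‖y‖ ≤ 1 / 2
        by_contra hlt
        nlinarith
      simp only [hf, u, h1, one_mul]
      exact norm_indicator_le_norm_self _ _
    · rw [hf, Set.indicator_of_notMem (by simpa using hy), norm_zero]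
      exact norm_nonneg _
  have hgrad : eLpNorm (fderiv ℝ u) (ENNReal.ofReal p) volume ≤
      K * (ENNReal.ofReal (R ^ (-((n : ℝ) / p))) * N) := by
    have h1 : eLpNorm (fderiv ℝ u) (ENNReal.ofReal p) volume ≤
        eLpNorm ((K : ℝ) • ∑ o, fun y => ‖lowOrder v o (t, R • y)‖) (ENNReal.ofReal p) volume := by
      refine eLpNorm_mono_real fun y => ?_
      simpa using hK v hv t ht y
    refine h1.trans ?_
    rw [eLpNorm_const_smul, Finset.mul_sum]
    have hKe : ‖(K : ℝ)‖ₑ = K := by simp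
    rw [hKe]
    refine mul_le_mul_right ((eLpNorm_sum_le (fun o _ => ?_) ?_).trans
      (Finset.sum_le_sum fun o _ => ?_)) _
    · exact ((hcont o).comp (continuous_const_smul R)).norm.aestronglyMeasurable
    · rw [ENNReal.one_le_ofReal]; linarith
    · rw [eLpNorm_norm]
      exact (eLpNorm_comp_dilation (hcont o).stronglyMeasurable hp0 hR0).le
  have hscale := eLpNorm_comp_dilation hfm hq0 hR0
  have hback : eLpNorm f (ENNReal.ofReal q) volume =
      ENNReal.ofReal (R ^ ((n : ℝ) / q)) *
        eLpNorm (fun y => f (R • y)) (ENNReal.ofReal q) volume := by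
    rw [hscale, ← mul_assoc, ← ENNReal.ofReal_mul (by positivity), ← Real.rpow_add hR0]
    simp
  calc eLpNorm f (ENNReal.ofReal q) volume
      ≤ ENNReal.ofReal (R ^ ((n : ℝ) / q)) *
        (C * (K * (ENNReal.ofReal (R ^ (-((n : ℝ) / p))) * N))) := by
        rw [hback]
        exact mul_le_mul_right ((hfu.trans (hC u hu husupp)).trans (mul_le_mul_right hgrad _)) _
    _ = ENNReal.ofReal (C * K * R ^ (-(n : ℝ) * (1/p - 1/q))) * N := by
        have hexp : R ^ (-(n : ℝ) * (1/p - 1/q)) = R ^ ((n : ℝ) / q) * R ^ (-((n : ℝ) / p)) := by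
          rw [← Real.rpow_add hR0]; congr 1; ring
        rw [hexp, ENNReal.ofReal_mul (by positivity), ENNReal.ofReal_mul (by positivity),
          ENNReal.ofReal_mul (by positivity), ENNReal.ofReal_coe_nnreal, ENNReal.ofReal_coe_nnreal]
        ring
    _ ≤ _ := by
        refine mul_le_mul_left (ENNReal.ofReal_le_ofReal ?_) _
        exact mul_le_mul_of_nonneg_right (by linarith) (by positivity)
end

section
/- Let n ≥ 2, 2 ≤ p < ∞, and let s be a positive integer with s > n/p. Then there exists a constant C > 0 such that for every t ≥ 0 and every C^∞ function v on [0,∞) × ℝⁿ which is Schwartz in the x-variable, ‖χ_{1,t} v(t,·)‖_{L^∞(ℝⁿ)} ≤ C (1+t)^{−n/p} Σ_{|α| ≤ s} ‖(Γ^α v)(t,·)‖_{L^p(ℝⁿ)}. -/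
/-!
Put `ρ = (1+t)/10` and fix `x` with `|x| < (1+t)/2`. Along the segment `r ↦ x + rρy`, with
`0 ≤ r ≤ 1` and `|y| ≤ 1`, the derivative of `f(t, ·)` is bounded by `n ∑ᵢ |Γᵢ f|`
(`weighted_dxD_le`): for `t ≥ 5` the segment stays strictly inside the light cone, where
`(t² - |x|²) ∂_j = t L_j - x_j S - ∑ₖ xₖ Ω_{kj}`, and for `t < 5` one has `ρ ≤ 1`.

The one-dimensional Hardy-type inequality `weighted_ineq` gives
`|h(0)| ≤ ∫₀¹ |h| + ∫₀¹ |h'|` and `∫₀¹ rᵏ|h| ≤ 2 ∫₀¹ rᵏ⁺¹|h| + ∫₀¹ rᵏ⁺¹|h'|`. Applying it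
successively to `f = Γ^α v` with growing `|α|` yields (`point_le_SumW`), for every `|y| ≤ 1`,
`|v(t,x)| ≤ C ∑_{|α| ≤ s} ∫₀¹ rˢ⁻¹ |Γ^α v(t, x + rρy)| dr`. Since absolute values are taken at
every step, the coefficients expressing `∂_j` through the `Γᵢ` are never differentiated.

Averaging over `y` in the unit ball, Tonelli and Hölder bound each term by
`C ρ^{-n/p} ‖Γ^α v(t,·)‖_{Lᵖ} ∫₀¹ r^{s-1-n/p} dr` (`segW_average_le`), and the last integral
converges because `s > n/p`.
-/

open MeasureTheory Real ENNReal FourierTransform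
open scoped ContDiff

/-! ### Smoothness of the iterated vector fields -/

lemma dirD_contDiff_s6 {n : ℕ} (v : STn n) {f : STn n → ℝ} (hf : ContDiff ℝ ∞ f) :
    ContDiff ℝ ∞ (dirD v f) :=
  (hf.fderiv_right (m := ∞) (by simp)).clm_apply contDiff_const

lemma coord_contDiff {n : ℕ} (j : Fin n) : ContDiff ℝ ∞ (fun p : STn n => p.2 j) := by
  fun_prop

lemma Gop_contDiff {n : ℕ} (i : GIdx n) {f : STn n → ℝ} (hf : ContDiff ℝ ∞ f) :
    ContDiff ℝ ∞ (Gop i f) := by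
  have ht : ContDiff ℝ ∞ (dtD f) := dirD_contDiff_s6 _ hf
  have hx : ∀ j, ContDiff ℝ ∞ (dxD j f) := fun j => dirD_contDiff_s6 _ hf
  rcases i with (_ | j) | j | ⟨j, k⟩ | _
  · exact ht
  · exact hx j
  · exact (contDiff_fst.mul (hx j)).add ((coord_contDiff j).mul ht)
  · exact ((coord_contDiff j).mul (hx k)).sub ((coord_contDiff k).mul (hx j))
  · exact (contDiff_fst.mul ht).add
      (ContDiff.sum fun j _ => (coord_contDiff j).mul (hx j))

lemma GwL_contDiff {n : ℕ} (l : List (GIdx n)) {f : STn n → ℝ} (hf : ContDiff ℝ ∞ f) :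
    ContDiff ℝ ∞ (GwL l f) := by
  induction l with
  | nil => exact hf
  | cons a l ih => exact Gop_contDiff a ih

/-! ### Spatial derivatives inside the light cone -/

/-- The key algebraic identity: `t L_j - x_j S - ∑ₖ xₖ Ω_{kj} = (t² - |x|²) ∂_j`. -/
lemma cone_identity {n : ℕ} (f : STn n → ℝ) (j : Fin n) (t : ℝ) (x : Spc n) :
    (t ^ 2 - ‖x‖ ^ 2) * dxD j f (t, x) =
      t * LD j f (t, x) - x j * SD f (t, x) - ∑ k, x k * RotD k j f (t, x) := by
  have h1 : ‖x‖ ^ 2 = ∑ k, x k * x k := by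
    rw [EuclideanSpace.norm_sq_eq]
    simp [sq]
  have h2 : ∑ k, x k * RotD k j f (t, x) =
      (∑ k, x k * x k) * dxD j f (t, x) - x j * ∑ k, x k * dxD k f (t, x) := by
    rw [Finset.sum_mul, Finset.mul_sum, ← Finset.sum_sub_distrib]
    refine Finset.sum_congr rfl fun k _ => ?_
    simp only [RotD]
    ring
  rw [h2, h1]
  simp only [LD, SD]
  ring

lemma sum_Gop {n : ℕ} (f : STn n → ℝ) (q : STn n) :
    ∑ i, |Gop i f q| = (|dtD f q| + ∑ j, |dxD j f q|) + (∑ j, |LD j f q| +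
      (∑ jk : Fin n × Fin n, |RotD jk.1 jk.2 f q| + |SD f q|)) := by
  have : ∑ i, |Gop i f q| =
      ∑ i : Option (Fin n) ⊕ Fin n ⊕ (Fin n × Fin n) ⊕ Unit, |Gop (n := n) i f q| := by
    apply Fintype.sum_equiv (Equiv.refl _)
    intro i
    rfl
  rw [this]
  simp [Fintype.sum_sum_type, Fintype.sum_option, Gop]

/-- On a neighbourhood of `|x| ≤ (1+t)/2` the weighted derivative `(1+t) ∂_j` is controlled by the
Klainerman fields. For `t ≥ 5` the region stays strictly inside the light cone and the identity
`cone_identity` applies; for `t < 5` the weight is bounded and `∂_j` itself is one of the fields. -/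
lemma weighted_dxD_le {n : ℕ} (f : STn n → ℝ) (j : Fin n) {t : ℝ} (ht : 0 ≤ t) {x : Spc n}
    (hx : ‖x‖ ≤ 3 / 5 * (1 + t)) :
    (1 + t) / 10 * |dxD j f (t, x)| ≤ ∑ i, |Gop i f (t, x)| := by
  have hj := Finset.single_le_sum (f := fun j => |dxD j f (t, x)|)
    (fun _ _ => abs_nonneg _) (Finset.mem_univ j)
  have hL := Finset.single_le_sum (f := fun j => |LD j f (t, x)|)
    (fun _ _ => abs_nonneg _) (Finset.mem_univ j)
  have hR : ∑ k, |RotD k j f (t, x)| ≤ ∑ jk : Fin n × Fin n, |RotD jk.1 jk.2 f (t, x)| := by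
    rw [Fintype.sum_prod_type]
    exact Finset.sum_le_sum fun k _ => Finset.single_le_sum
      (f := fun j => |RotD k j f (t, x)|) (fun _ _ => abs_nonneg _) (Finset.mem_univ j)
  have hj0 : 0 ≤ ∑ j, |dxD j f (t, x)| := Finset.sum_nonneg fun _ _ => abs_nonneg _
  have hL0 : 0 ≤ ∑ j, |LD j f (t, x)| := Finset.sum_nonneg fun _ _ => abs_nonneg _
  have hR0 : 0 ≤ ∑ k, |RotD k j f (t, x)| := Finset.sum_nonneg fun _ _ => abs_nonneg _
  have hS0 := abs_nonneg (SD f (t, x))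
  have hT0 := abs_nonneg (dtD f (t, x))
  have hD0 := abs_nonneg (dxD j f (t, x))
  rw [sum_Gop]
  rcases lt_or_ge t 5 with h5 | h5
  · nlinarith
  · have hxt : ‖x‖ ≤ 18 / 25 * t := by linarith
    have hxk : ∀ k, |x k| ≤ t := fun k => by
      have := PiLp.norm_apply_le x k
      rw [Real.norm_eq_abs] at this
      linarith
    have h1 : (t ^ 2 - ‖x‖ ^ 2) * |dxD j f (t, x)| ≤
        t * (|LD j f (t, x)| + |SD f (t, x)| + ∑ k, |RotD k j f (t, x)|) := by
      have hpos : 0 ≤ t ^ 2 - ‖x‖ ^ 2 := by nlinarith [norm_nonneg x]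
      have hs : |∑ k, x k * RotD k j f (t, x)| ≤ t * ∑ k, |RotD k j f (t, x)| := by
        rw [Finset.mul_sum]
        refine (Finset.abs_sum_le_sum_abs _ _).trans (Finset.sum_le_sum fun k _ => ?_)
        rw [abs_mul]
        exact mul_le_mul_of_nonneg_right (hxk k) (abs_nonneg _)
      calc (t ^ 2 - ‖x‖ ^ 2) * |dxD j f (t, x)| = |(t ^ 2 - ‖x‖ ^ 2) * dxD j f (t, x)| := by
            rw [abs_mul, abs_of_nonneg hpos]
        _ ≤ |t * LD j f (t, x)| + |x j * SD f (t, x)| + |∑ k, x k * RotD k j f (t, x)| := by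
            rw [cone_identity]
            exact (abs_sub _ _).trans (add_le_add_left (abs_sub _ _) _)
        _ ≤ t * |LD j f (t, x)| + t * |SD f (t, x)| + t * ∑ k, |RotD k j f (t, x)| := by
            rw [abs_mul, abs_mul, abs_of_nonneg ht]
            have := mul_le_mul_of_nonneg_right (hxk j) hS0
            linarith
        _ = _ := by ring
    have h2 : t * ((1 + t) / 10 * |dxD j f (t, x)|) ≤ (t ^ 2 - ‖x‖ ^ 2) * |dxD j f (t, x)| := by
      rw [← mul_assoc]
      exact mul_le_mul_of_nonneg_right (by nlinarith [norm_nonneg x]) hD0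
    have h3 := le_of_mul_le_mul_left (h2.trans h1) (by linarith)
    linarith

lemma segment_deriv {n : ℕ} {f : STn n → ℝ} (hf : ContDiff ℝ ∞ f) (t ρ : ℝ) (x y : Spc n)
    (r : ℝ) :
    HasDerivAt (fun r : ℝ => f (t, x + (r * ρ) • y))
      (∑ j, y j * (ρ * dxD j f (t, x + (r * ρ) • y))) r := by
  have h1 : HasDerivAt (fun r : ℝ => ((t, x + (r * ρ) • y) : STn n)) ((0, ρ • y) : STn n) r := by
    refine HasDerivAt.prodMk (hasDerivAt_const _ _) ?_
    have := (((hasDerivAt_id r).mul_const ρ).smul_const y).const_add x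
    simpa using this
  have h2 := ((hf.differentiable (by simp)) (t, x + (r * ρ) • y)).hasFDerivAt.comp_hasDerivAt r h1
  have hy : ((0, ρ • y) : STn n) =
      ∑ j, (y j * ρ) • ((0, EuclideanSpace.single j 1) : STn n) := by
    rw [Prod.ext_iff]
    simp only [Prod.fst_sum, Prod.snd_sum, Prod.smul_fst, Prod.smul_snd]
    refine ⟨by simp, ?_⟩
    ext k
    simp [Finset.sum_apply, Pi.single_apply, mul_comm]
  rw [hy, map_sum] at h2
  simp only [map_smul, smul_eq_mul, mul_assoc] at h2
  exact h2

/-! ### The one-dimensional weighted inequality -/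

/-- `weighted_ineq` up to an error `ε`, which comes from replacing `|h|` by the differentiable
function `√(ε² + h²)`. -/
lemma weighted_aux (k : ℕ) {h h' : ℝ → ℝ} (hd : ∀ r, HasDerivAt h (h' r) r)
    (hc : Continuous h') {ε : ℝ} (hε : 0 < ε) :
    (k : ℝ) * (∫ r in (0 : ℝ)..1, r ^ (k - 1) * |h r|) + (if k = 0 then |h 0| else 0) ≤
      (k + 1) * (∫ r in (0 : ℝ)..1, r ^ k * |h r|) + (∫ r in (0 : ℝ)..1, r ^ k * |h' r|)
        + (k + 1) * ε := by
  have hh : Continuous h := continuous_iff_continuousAt.2 fun r => (hd r).continuousAt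
  set g : ℝ → ℝ := fun r => √(ε ^ 2 + h r ^ 2) with hg
  have hpos : ∀ r, 0 < ε ^ 2 + h r ^ 2 := fun r => by positivity
  have hgpos : ∀ r, 0 < g r := fun r => Real.sqrt_pos.2 (hpos r)
  have hgc : Continuous g := by fun_prop
  have hg1 : ∀ r, |h r| ≤ g r := fun r => Real.abs_le_sqrt (by nlinarith)
  have hg2 : ∀ r, g r ≤ |h r| + ε := fun r => by
    rw [hg]
    apply Real.sqrt_le_iff.2
    refine ⟨by positivity, ?_⟩
    nlinarith [sq_abs (h r), abs_nonneg (h r)]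
  have hgd : ∀ r, HasDerivAt g (h r * h' r / g r) r := fun r => by
    have := (((hd r).pow 2).const_add (ε ^ 2)).sqrt (hpos r).ne'
    have e : ((2 : ℕ) : ℝ) * h r ^ (2 - 1) * h' r / (2 * √(ε ^ 2 + (h ^ 2) r)) =
        h r * h' r / g r := by
      have e' : √(ε ^ 2 + (h ^ 2) r) = g r := rfl
      rw [e']
      have := (hgpos r).ne'
      field_simp
      norm_num
      ring
    rw [e] at this
    exact this
  have hg3 : ∀ r, |h r * h' r / g r| ≤ |h' r| := fun r => by
    rw [abs_div, abs_mul, abs_of_pos (hgpos r), div_le_iff₀ (hgpos r), mul_comm]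
    exact mul_le_mul_of_nonneg_left (hg1 r) (abs_nonneg _)
  -- integrate the derivative of `r ^ k * (1 - r) * g r`
  set G : ℝ → ℝ := fun r => (k * r ^ (k - 1) * (1 - r) + r ^ k * (-1)) * g r
    + r ^ k * (1 - r) * (h r * h' r / g r) with hG
  have hGc : Continuous G := by
    have : Continuous fun r => h r * h' r / g r :=
      (hh.mul hc).div hgc fun r => (hgpos r).ne'
    fun_prop
  have hF : ∀ r, HasDerivAt (fun r => r ^ k * (1 - r) * g r) (G r) r := fun r =>
    ((hasDerivAt_pow k r).mul ((hasDerivAt_id r).const_sub 1)).mul (hgd r)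
  have hint := intervalIntegral.integral_eq_sub_of_hasDerivAt (a := 0) (b := 1)
    (fun r _ => hF r) (hGc.intervalIntegrable _ _)
  have hend : (∫ r in (0 : ℝ)..1, G r) ≤ -(if k = 0 then |h 0| else 0) := by
    rw [hint]
    rcases k with _ | k
    · simpa using hg1 0
    · simp
  have hle : ∀ r ∈ Set.Icc (0 : ℝ) 1, k * (r ^ (k - 1) * |h r|) ≤
      G r + ((k + 1) * (r ^ k * |h r|) + r ^ k * |h' r| + (k + 1) * ε) := fun r hr => by
    have hr0 := hr.1
    have hr1 := hr.2
    have hrk : 0 ≤ r ^ k := pow_nonneg hr0 k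
    have hrk1 : r ^ k ≤ 1 := pow_le_one₀ hr0 hr1
    have e1 : (k : ℝ) * r ^ (k - 1) * r = k * r ^ k := by
      rcases k with _ | k
      · simp
      · simp [pow_succ, mul_assoc]
    have hGe : G r = k * r ^ (k - 1) * g r - (k + 1) * (r ^ k * g r)
        + r ^ k * ((1 - r) * (h r * h' r / g r)) := by
      simp only [hG]
      linear_combination (-g r) * e1
    have a1 : (k : ℝ) * r ^ (k - 1) * |h r| ≤ k * r ^ (k - 1) * g r :=
      mul_le_mul_of_nonneg_left (hg1 r) (by positivity)
    have a2 : (k + 1) * (r ^ k * g r) ≤ (k + 1) * (r ^ k * |h r| + ε) := by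
      refine mul_le_mul_of_nonneg_left ?_ (by positivity)
      nlinarith [mul_le_mul_of_nonneg_left (hg2 r) hrk]
    have a3 : -(r ^ k * |h' r|) ≤ r ^ k * ((1 - r) * (h r * h' r / g r)) := by
      rw [← mul_neg]
      refine mul_le_mul_of_nonneg_left ?_ hrk
      have b1 := neg_abs_le ((1 - r) * (h r * h' r / g r))
      rw [abs_mul, abs_of_nonneg (by linarith : 0 ≤ 1 - r)] at b1
      nlinarith [hg3 r, abs_nonneg (h r * h' r / g r)]
    rw [hGe]
    linarith
  clear_value G
  have hmono := intervalIntegral.integral_mono_on (a := (0 : ℝ)) (b := 1) (μ := volume) (by norm_num)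
    (Continuous.intervalIntegrable (by fun_prop) _ _)
    (Continuous.intervalIntegrable (by fun_prop) _ _) hle
  rw [intervalIntegral.integral_add (hGc.intervalIntegrable _ _)
      (Continuous.intervalIntegrable (by fun_prop) _ _),
    intervalIntegral.integral_add (Continuous.intervalIntegrable (by fun_prop) _ _)
      (Continuous.intervalIntegrable (by fun_prop) _ _),
    intervalIntegral.integral_add (Continuous.intervalIntegrable (by fun_prop) _ _)
      (Continuous.intervalIntegrable (by fun_prop) _ _)] at hmono
  simp only [intervalIntegral.integral_const_mul, intervalIntegral.integral_const, sub_zero,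
    one_smul] at hmono
  linarith

/-- A Hardy-type inequality on `[0, 1]`, obtained by integrating the derivative of
`r ^ k * (1 - r) * |h r|`. For `k = 0` the boundary term at `0` survives and gives the pointwise
bound; for `k > 0` the inequality trades one derivative for one more power of `r`. -/
lemma weighted_ineq (k : ℕ) {h h' : ℝ → ℝ} (hd : ∀ r, HasDerivAt h (h' r) r)
    (hc : Continuous h') :
    (k : ℝ) * (∫ r in (0 : ℝ)..1, r ^ (k - 1) * |h r|) + (if k = 0 then |h 0| else 0) ≤
      (k + 1) * (∫ r in (0 : ℝ)..1, r ^ k * |h r|) + (∫ r in (0 : ℝ)..1, r ^ k * |h' r|) := by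
  refine le_of_forall_pos_le_add fun δ hδ => ?_
  have hk : (0 : ℝ) < k + 1 := by positivity
  have := weighted_aux k hd hc (ε := δ / (k + 1)) (by positivity)
  rwa [mul_div_cancel₀ _ hk.ne'] at this

lemma ofReal_weighted (k : ℕ) {u : ℝ → ℝ} (hu : Continuous u) :
    ENNReal.ofReal (∫ r in (0 : ℝ)..1, r ^ k * |u r|) =
      ∫⁻ r in Set.Ioc (0 : ℝ) 1, ENNReal.ofReal (r ^ k) * ‖u r‖ₑ := by
  rw [intervalIntegral.integral_of_le zero_le_one, ofReal_integral_eq_lintegral_ofReal]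
  · refine setLIntegral_congr_fun measurableSet_Ioc fun r hr => ?_
    rw [ENNReal.ofReal_mul (pow_nonneg hr.1.le k), ← Real.norm_eq_abs, ofReal_norm]
  · exact (Continuous.intervalIntegrable (by fun_prop) 0 1).1
  · refine (ae_restrict_iff' measurableSet_Ioc).2 (Filter.Eventually.of_forall fun r hr => ?_)
    exact mul_nonneg (pow_nonneg hr.1.le k) (abs_nonneg _)

lemma pointwise_enn {h h' : ℝ → ℝ} (hd : ∀ r, HasDerivAt h (h' r) r) (hc : Continuous h') :
    ‖h 0‖ₑ ≤ (∫⁻ r in Set.Ioc (0 : ℝ) 1, ENNReal.ofReal (r ^ 0) * ‖h r‖ₑ) +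
      ∫⁻ r in Set.Ioc (0 : ℝ) 1, ENNReal.ofReal (r ^ 0) * ‖h' r‖ₑ := by
  have hh : Continuous h := continuous_iff_continuousAt.2 fun r => (hd r).continuousAt
  have := weighted_ineq 0 hd hc
  simp only [Nat.cast_zero, zero_mul, zero_add, if_true, one_mul] at this
  rw [← ofReal_weighted 0 hh, ← ofReal_weighted 0 hc, ← ofReal_norm, Real.norm_eq_abs]
  exact (ENNReal.ofReal_le_ofReal this).trans ENNReal.ofReal_add_le

lemma weighted_enn (k : ℕ) {h h' : ℝ → ℝ} (hd : ∀ r, HasDerivAt h (h' r) r)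
    (hc : Continuous h') :
    (∫⁻ r in Set.Ioc (0 : ℝ) 1, ENNReal.ofReal (r ^ k) * ‖h r‖ₑ) ≤
      2 * (∫⁻ r in Set.Ioc (0 : ℝ) 1, ENNReal.ofReal (r ^ (k + 1)) * ‖h r‖ₑ) +
      ∫⁻ r in Set.Ioc (0 : ℝ) 1, ENNReal.ofReal (r ^ (k + 1)) * ‖h' r‖ₑ := by
  have hh : Continuous h := continuous_iff_continuousAt.2 fun r => (hd r).continuousAt
  have h0 : ∀ (j : ℕ) (u : ℝ → ℝ), 0 ≤ ∫ r in (0 : ℝ)..1, r ^ j * |u r| := fun j u =>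
    intervalIntegral.integral_nonneg zero_le_one fun r hr =>
      mul_nonneg (pow_nonneg hr.1 j) (abs_nonneg _)
  have := weighted_ineq (k + 1) hd hc
  simp only [Nat.add_sub_cancel, Nat.add_eq_zero_iff, one_ne_zero, and_false, if_false,
    add_zero] at this
  push_cast at this
  have h1 := h0 (k + 1) h
  have h2 := h0 (k + 1) h'
  have hk : (0 : ℝ) ≤ k := Nat.cast_nonneg k
  have key : (∫ r in (0 : ℝ)..1, r ^ k * |h r|) ≤
      2 * (∫ r in (0 : ℝ)..1, r ^ (k + 1) * |h r|) + ∫ r in (0 : ℝ)..1, r ^ (k + 1) * |h' r| := by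
    refine le_of_mul_le_mul_left (this.trans ?_) (by positivity : (0 : ℝ) < k + 1)
    nlinarith
  rw [← ofReal_weighted k hh, ← ofReal_weighted _ hh, ← ofReal_weighted _ hc]
  refine (ENNReal.ofReal_le_ofReal key).trans (ENNReal.ofReal_add_le.trans ?_)
  rw [ENNReal.ofReal_mul (by norm_num)]
  simp

/-! ### Iteration along a segment -/

/-- The weighted integral `∫₀¹ rᵏ |f(t, x + r ρ y)| dr` along the segment from `x` to `x + ρ y`. -/
noncomputable def segW {n : ℕ} (k : ℕ) (t ρ : ℝ) (x y : Spc n) (f : STn n → ℝ) : ℝ≥0∞ :=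
  ∫⁻ r in Set.Ioc (0 : ℝ) 1, ENNReal.ofReal (r ^ k) * ‖f (t, x + (r * ρ) • y)‖ₑ

lemma seg_continuous {n : ℕ} {f : STn n → ℝ} (hf : ContDiff ℝ ∞ f) (t ρ : ℝ) (x y : Spc n) :
    Continuous fun r : ℝ => f (t, x + (r * ρ) • y) :=
  hf.continuous.comp (by fun_prop)

lemma segW_deriv_le {n : ℕ} (k : ℕ) {t : ℝ} (ht : 0 ≤ t) {x y : Spc n}
    (hx : ‖x‖ < (1 + t) / 2) (hy : ‖y‖ ≤ 1) {f : STn n → ℝ} (hf : ContDiff ℝ ∞ f) :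
    (∫⁻ r in Set.Ioc (0 : ℝ) 1, ENNReal.ofReal (r ^ k) *
      ‖∑ j, y j * ((1 + t) / 10 * dxD j f (t, x + (r * ((1 + t) / 10)) • y))‖ₑ) ≤
      n * ∑ i, segW k t ((1 + t) / 10) x y (Gop i f) := by
  simp only [segW]
  rw [← lintegral_finsetSum', ← lintegral_const_mul' _ _ (by simp)]
  · refine setLIntegral_mono' measurableSet_Ioc fun r hr => ?_
    rw [← Finset.mul_sum, mul_left_comm]
    refine mul_le_mul_right ?_ _
    set q := x + (r * ((1 + t) / 10)) • y with hq
    have hqn : ‖q‖ ≤ 3 / 5 * (1 + t) := by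
      have h1 : ‖(r * ((1 + t) / 10)) • y‖ ≤ (1 + t) / 10 := by
        rw [norm_smul, Real.norm_eq_abs, abs_of_nonneg (mul_nonneg hr.1.le (by linarith))]
        have h2 : r * ((1 + t) / 10) ≤ (1 + t) / 10 :=
          mul_le_of_le_one_left (by linarith) hr.2
        exact (mul_le_of_le_one_right (mul_nonneg hr.1.le (by linarith)) hy).trans h2
      have := norm_add_le x ((r * ((1 + t) / 10)) • y)
      linarith
    have hreal : ‖∑ j, y j * ((1 + t) / 10 * dxD j f (t, q))‖ ≤ n * ∑ i, ‖Gop i f (t, q)‖ := by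
      calc ‖∑ j, y j * ((1 + t) / 10 * dxD j f (t, q))‖
          ≤ ∑ j : Fin n, ‖y j * ((1 + t) / 10 * dxD j f (t, q))‖ := norm_sum_le _ _
        _ ≤ ∑ _j : Fin n, ∑ i, ‖Gop i f (t, q)‖ := by
            refine Finset.sum_le_sum fun j _ => ?_
            have h1 := (PiLp.norm_apply_le y j).trans hy
            have h2 := weighted_dxD_le f j ht hqn
            rw [norm_mul, norm_mul, Real.norm_eq_abs ((1 + t) / 10),
              abs_of_nonneg (by linarith : 0 ≤ (1 + t) / 10)]
            exact (mul_le_of_le_one_left (by positivity) h1).trans h2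
        _ = _ := by simp
    calc ‖∑ j, y j * ((1 + t) / 10 * dxD j f (t, q))‖ₑ
        = ENNReal.ofReal ‖∑ j, y j * ((1 + t) / 10 * dxD j f (t, q))‖ := (ofReal_norm _).symm
      _ ≤ ENNReal.ofReal (n * ∑ i, ‖Gop i f (t, q)‖) := ENNReal.ofReal_le_ofReal hreal
      _ = n * ∑ i, ‖Gop i f (t, q)‖ₑ := by
          rw [ENNReal.ofReal_mul (by positivity), ENNReal.ofReal_natCast,
            ENNReal.ofReal_sum_of_nonneg fun _ _ => norm_nonneg _]
          simp only [ofReal_norm]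
  · intro i _
    have := seg_continuous (Gop_contDiff i hf) t ((1 + t) / 10) x y
    have h2 : Measurable fun r : ℝ => ENNReal.ofReal (r ^ k) := by fun_prop
    exact (h2.mul this.measurable.enorm).aemeasurable

lemma seg_deriv_continuous {n : ℕ} {f : STn n → ℝ} (hf : ContDiff ℝ ∞ f) (t ρ : ℝ)
    (x y : Spc n) :
    Continuous fun r : ℝ => ∑ j, y j * (ρ * dxD j f (t, x + (r * ρ) • y)) := by
  refine continuous_finsetSum _ fun j _ => ?_
  have := seg_continuous (dirD_contDiff_s6 (0, EuclideanSpace.single j 1) hf) t ρ x y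
  exact continuous_const.mul (continuous_const.mul this)

lemma point_le_segW {n : ℕ} {t : ℝ} (ht : 0 ≤ t) {x y : Spc n}
    (hx : ‖x‖ < (1 + t) / 2) (hy : ‖y‖ ≤ 1) {f : STn n → ℝ} (hf : ContDiff ℝ ∞ f) :
    ‖f (t, x)‖ₑ ≤ (2 + n : ℝ≥0∞) * (segW 0 t ((1 + t) / 10) x y f +
      ∑ i, segW 0 t ((1 + t) / 10) x y (Gop i f)) := by
  have h := pointwise_enn (segment_deriv hf t ((1 + t) / 10) x y) (seg_deriv_continuous hf _ _ _ _)
  simp only [zero_mul, zero_smul, add_zero] at h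
  refine h.trans ((add_le_add_right (segW_deriv_le 0 ht hx hy hf) _).trans ?_)
  rw [mul_add]
  refine add_le_add ?_ (mul_le_mul_left (by simp) _)
  exact le_mul_of_one_le_left (zero_le) (le_add_right (by norm_num))

lemma segW_le {n : ℕ} (k : ℕ) {t : ℝ} (ht : 0 ≤ t) {x y : Spc n}
    (hx : ‖x‖ < (1 + t) / 2) (hy : ‖y‖ ≤ 1) {f : STn n → ℝ} (hf : ContDiff ℝ ∞ f) :
    segW k t ((1 + t) / 10) x y f ≤ (2 + n : ℝ≥0∞) * (segW (k + 1) t ((1 + t) / 10) x y f +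
      ∑ i, segW (k + 1) t ((1 + t) / 10) x y (Gop i f)) := by
  have h := weighted_enn k (segment_deriv hf t ((1 + t) / 10) x y)
    (seg_deriv_continuous hf _ _ _ _)
  refine h.trans ((add_le_add_right (segW_deriv_le (k + 1) ht hx hy hf) _).trans ?_)
  rw [mul_add]
  exact add_le_add (mul_le_mul_left (by simp) _) (mul_le_mul_left (by simp) _)

/-- A bound costing one vector field, applied to every word of length at most `N`. -/
lemma SumW_step {n : ℕ} (N : ℕ) {Φ Ψ : (STn n → ℝ) → ℝ≥0∞} {K : ℝ≥0∞}
    (h : ∀ g, ContDiff ℝ ∞ g → Φ g ≤ K * (Ψ g + ∑ i, Ψ (Gop i g)))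
    {f : STn n → ℝ} (hf : ContDiff ℝ ∞ f) :
    SumW N Φ f ≤ 2 * K * SumW (N + 1) Ψ f := by
  have hA : SumW N Ψ f ≤ SumW (N + 1) Ψ f :=
    Finset.sum_le_sum_of_subset (Finset.range_mono (by omega))
  have hB : ∑ m ∈ Finset.range (N + 1), ∑ w : Fin m → GIdx n,
      ∑ i, Ψ (Gop i (GwL (List.ofFn w) f)) ≤ SumW (N + 1) Ψ f := by
    unfold SumW
    rw [Finset.sum_range_succ' _ (N + 1)]
    refine le_add_right (Finset.sum_le_sum fun m _ => le_of_eq ?_)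
    rw [← (Fin.consEquiv fun _ : Fin (m + 1) => GIdx n).sum_comp, Fintype.sum_prod_type,
      Finset.sum_comm]
    refine Finset.sum_congr rfl fun i _ => Finset.sum_congr rfl fun w _ => ?_
    simp [Fin.consEquiv, List.ofFn_succ, GwL]
  calc SumW N Φ f ≤ ∑ m ∈ Finset.range (N + 1), ∑ w : Fin m → GIdx n,
        K * (Ψ (GwL (List.ofFn w) f) + ∑ i, Ψ (Gop i (GwL (List.ofFn w) f))) :=
        Finset.sum_le_sum fun m _ => Finset.sum_le_sum fun w _ => h _ (GwL_contDiff _ hf)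
    _ = K * (SumW N Ψ f + ∑ m ∈ Finset.range (N + 1), ∑ w : Fin m → GIdx n,
        ∑ i, Ψ (Gop i (GwL (List.ofFn w) f))) := by
        simp only [SumW, ← Finset.mul_sum, Finset.sum_add_distrib]
    _ ≤ K * (SumW (N + 1) Ψ f + SumW (N + 1) Ψ f) := by gcongr
    _ = _ := by ring

/-- Iterating the one-dimensional inequality: each step spends one vector field and gains one power
of `r` in the weight. The bound holds for every direction `y` in the unit ball. -/
lemma point_le_SumW {n : ℕ} (k : ℕ) {t : ℝ} (ht : 0 ≤ t) {x y : Spc n}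
    (hx : ‖x‖ < (1 + t) / 2) (hy : ‖y‖ ≤ 1) {f : STn n → ℝ} (hf : ContDiff ℝ ∞ f) :
    ‖f (t, x)‖ₑ ≤ (2 * (2 + n : ℝ≥0∞)) ^ (k + 1) *
      SumW (k + 1) (segW k t ((1 + t) / 10) x y) f := by
  induction k with
  | zero =>
    have := SumW_step 0 (Φ := fun g => ‖g (t, x)‖ₑ) (fun g hg => point_le_segW ht hx hy hg) hf
    simpa [SumW, GwL] using this
  | succ k ih =>
    refine ih.trans ?_
    rw [pow_succ _ (k + 1), mul_assoc]
    have := SumW_step (k + 1) (Φ := segW k t ((1 + t) / 10) x y)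
      (fun g hg => segW_le k ht hx hy hg) hf
    gcongr

/-! ### Averaging over directions -/

lemma eLpNorm_comp_affine {n : ℕ} {g : Spc n → ℝ} (hg : Continuous g) (x : Spc n)
    {a : ℝ} (ha : 0 < a) {p : ℝ} (hp : 0 < p) :
    eLpNorm (fun y => g (x + a • y)) (ENNReal.ofReal p) volume =
      ENNReal.ofReal (a ^ (-(n : ℝ) / p)) * eLpNorm g (ENNReal.ofReal p) volume := by
  have h1 : eLpNorm (fun y => g (x + a • y)) (ENNReal.ofReal p) volume =
      eLpNorm (fun y => g (x + y)) (ENNReal.ofReal p) (Measure.map (a • ·) volume) := by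
    rw [eLpNorm_map_measure (by fun_prop) (by fun_prop)]
    rfl
  have h2 : eLpNorm (fun y => g (x + y)) (ENNReal.ofReal p) volume =
      eLpNorm g (ENNReal.ofReal p) volume :=
    eLpNorm_comp_measurePreserving hg.aestronglyMeasurable
      (measurePreserving_add_left volume x)
  rw [h1, Measure.map_addHaar_smul volume ha.ne', eLpNorm_smul_measure_of_ne_top (by simp), h2,
    smul_eq_mul, ENNReal.toReal_div, ENNReal.toReal_one, ENNReal.toReal_ofReal hp.le,
    ENNReal.ofReal_rpow_of_nonneg (by positivity)
      (by positivity)]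
  congr 2
  rw [finrank_euclideanSpace_fin, abs_of_pos (by positivity), ← Real.rpow_natCast,
    ← Real.rpow_neg ha.le, ← Real.rpow_mul ha.le]
  congr 1
  ring

/-- Hölder's inequality on the unit ball followed by the change of variables `y ↦ x + a y`. -/
lemma ball_average_le {n : ℕ} {g : Spc n → ℝ} (hg : Continuous g) (x : Spc n)
    {a : ℝ} (ha : 0 < a) {p : ℝ} (hp : 1 ≤ p) :
    (∫⁻ y in Metric.ball (0 : Spc n) 1, ‖g (x + a • y)‖ₑ) ≤
      volume (Metric.ball (0 : Spc n) 1) ^ (1 - 1 / p) *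
        (ENNReal.ofReal (a ^ (-(n : ℝ) / p)) * eLpNorm g (ENNReal.ofReal p) volume) := by
  have hc : Continuous fun y => g (x + a • y) := by fun_prop
  have h1 := eLpNorm_le_eLpNorm_mul_rpow_measure_univ (p := 1) (q := ENNReal.ofReal p)
    (μ := volume.restrict (Metric.ball (0 : Spc n) 1)) (by simpa using hp)
    hc.aestronglyMeasurable
  rw [eLpNorm_one_eq_lintegral_enorm, Measure.restrict_apply_univ,
    ENNReal.toReal_ofReal (by linarith), ENNReal.toReal_one, div_one] at h1
  refine h1.trans ?_
  rw [mul_comm, ← eLpNorm_comp_affine hg x ha (by linarith)]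
  gcongr
  exact Measure.restrict_le_self

/-- The constant produced by averaging `segW` over the unit ball. -/
noncomputable def avgC (n k : ℕ) (p : ℝ) : ℝ≥0∞ :=
  volume (Metric.ball (0 : Spc n) 1) ^ (1 - 1 / p) *
    ∫⁻ r in Set.Ioc (0 : ℝ) 1, ENNReal.ofReal (r ^ ((k : ℝ) + -(n : ℝ) / p))

/-- The radial integral converges at the origin because `n / p < k + 1`. -/
lemma avgC_ne_top (n k : ℕ) {p : ℝ} (hp : 1 ≤ p) (h : (n : ℝ) / p < k + 1) :
    avgC n k p ≠ ⊤ := by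
  refine ENNReal.mul_ne_top (ENNReal.rpow_ne_top_of_nonneg ?_ measure_ball_lt_top.ne) ?_
  · have : 1 / p ≤ 1 := by rw [div_le_one (by linarith)]; exact hp
    linarith
  · have hi := (intervalIntegral.intervalIntegrable_rpow' (a := 0) (b := 1)
      (r := (k : ℝ) + -(n : ℝ) / p) (by rw [neg_div]; linarith)).1
    exact hi.lintegral_lt_top.ne

lemma segW_average_le {n : ℕ} (k : ℕ) {p : ℝ} (hp : 1 ≤ p) (t : ℝ) {ρ : ℝ} (hρ : 0 < ρ)
    (x : Spc n) {f : STn n → ℝ} (hf : ContDiff ℝ ∞ f) :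
    (∫⁻ y in Metric.ball (0 : Spc n) 1, segW k t ρ x y f) ≤
      avgC n k p * ENNReal.ofReal (ρ ^ (-(n : ℝ) / p)) *
        eLpNorm (fun x => f (t, x)) (ENNReal.ofReal p) volume := by
  have hg : Continuous fun x => f (t, x) := hf.continuous.comp (by fun_prop)
  unfold segW
  rw [lintegral_lintegral_swap]
  · calc ∫⁻ r in Set.Ioc (0 : ℝ) 1, ∫⁻ y in Metric.ball (0 : Spc n) 1,
          ENNReal.ofReal (r ^ k) * ‖f (t, x + (r * ρ) • y)‖ₑ
        ≤ ∫⁻ r in Set.Ioc (0 : ℝ) 1, ENNReal.ofReal (r ^ ((k : ℝ) + -(n : ℝ) / p)) *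
          (volume (Metric.ball (0 : Spc n) 1) ^ (1 - 1 / p) *
          ENNReal.ofReal (ρ ^ (-(n : ℝ) / p)) *
          eLpNorm (fun x => f (t, x)) (ENNReal.ofReal p) volume) := by
          refine setLIntegral_mono' measurableSet_Ioc fun r hr => ?_
          rw [lintegral_const_mul' _ _ ENNReal.ofReal_ne_top]
          refine (mul_le_mul_right (ball_average_le hg x (mul_pos hr.1 hρ) hp) _).trans
            (le_of_eq ?_)
          rw [Real.mul_rpow hr.1.le hρ.le, ENNReal.ofReal_mul (Real.rpow_nonneg hr.1.le _),
            Real.rpow_add hr.1, ENNReal.ofReal_mul (Real.rpow_nonneg hr.1.le _),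
            Real.rpow_natCast]
          ring
      _ = _ := by
          rw [lintegral_mul_const _ (by fun_prop), avgC]
          ring
  · have h1 : Continuous fun q : Spc n × ℝ => f (t, x + (q.2 * ρ) • q.1) :=
      hf.continuous.comp (by fun_prop)
    have h2 : Measurable fun q : Spc n × ℝ => ENNReal.ofReal (q.2 ^ k) := by fun_prop
    exact (h2.mul h1.measurable.enorm).aemeasurable

lemma segW_measurable {n : ℕ} (k : ℕ) (t ρ : ℝ) (x : Spc n) {f : STn n → ℝ}
    (hf : ContDiff ℝ ∞ f) : Measurable fun y => segW k t ρ x y f := by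
  have h1 : Continuous fun q : Spc n × ℝ => f (t, x + (q.2 * ρ) • q.1) :=
    hf.continuous.comp (by fun_prop)
  have h2 : Measurable fun q : Spc n × ℝ => ENNReal.ofReal (q.2 ^ k) := by fun_prop
  exact (h2.mul h1.measurable.enorm).lintegral_prod_right'

/-- The pointwise form of the inequality, with an explicit constant. -/
lemma pointwise_bound {n : ℕ} (k : ℕ) {p : ℝ} (hp : 1 ≤ p) {t : ℝ} (ht : 0 ≤ t) {x : Spc n}
    (hx : ‖x‖ < (1 + t) / 2) {f : STn n → ℝ} (hf : ContDiff ℝ ∞ f) :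
    ‖f (t, x)‖ₑ ≤ (volume (Metric.ball (0 : Spc n) 1))⁻¹ * (2 * (2 + n : ℝ≥0∞)) ^ (k + 1) *
      avgC n k p * ENNReal.ofReal (((1 + t) / 10) ^ (-(n : ℝ) / p)) *
      SumW (k + 1) (fun g => eLpNorm (fun x => g (t, x)) (ENNReal.ofReal p) volume) f := by
  set V := volume (Metric.ball (0 : Spc n) 1) with hV
  have hV0 : V ≠ 0 := (Metric.measure_ball_pos volume _ one_pos).ne'
  have hVt : V ≠ ⊤ := measure_ball_lt_top.ne
  have hρ : 0 < (1 + t) / 10 := by linarith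
  set K : ℝ≥0∞ := (2 * (2 + n : ℝ≥0∞)) ^ (k + 1) with hK
  set D := avgC n k p * ENNReal.ofReal (((1 + t) / 10) ^ (-(n : ℝ) / p)) with hD
  have hKt : K ≠ ⊤ := ENNReal.pow_ne_top (ENNReal.mul_ne_top (by simp) (by simp))
  have key : V * ‖f (t, x)‖ₑ ≤ K * (D *
      SumW (k + 1) (fun g => eLpNorm (fun x => g (t, x)) (ENNReal.ofReal p) volume) f) := by
    calc V * ‖f (t, x)‖ₑ = ∫⁻ _y in Metric.ball (0 : Spc n) 1, ‖f (t, x)‖ₑ := by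
          rw [setLIntegral_const, mul_comm]
      _ ≤ ∫⁻ y in Metric.ball (0 : Spc n) 1,
          K * SumW (k + 1) (segW k t ((1 + t) / 10) x y) f := by
          refine setLIntegral_mono' measurableSet_ball fun y hy => ?_
          exact point_le_SumW k ht hx (by simpa using (mem_ball_zero_iff.1 hy).le) hf
      _ = K * SumW (k + 1) (fun g => ∫⁻ y in Metric.ball (0 : Spc n) 1,
          segW k t ((1 + t) / 10) x y g) f := by
          have hm : ∀ (m : ℕ) (w : Fin m → GIdx n), Measurable fun y =>
              segW k t ((1 + t) / 10) x y (GwL (List.ofFn w) f) := fun m w =>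
            segW_measurable k t _ x (GwL_contDiff _ hf)
          rw [lintegral_const_mul' _ _ hKt]
          unfold SumW
          rw [lintegral_finsetSum _ fun m _ => Finset.measurable_sum _ fun w _ => hm m w]
          congr 1
          refine Finset.sum_congr rfl fun m _ => ?_
          rw [lintegral_finsetSum _ fun w _ => hm m w]
      _ ≤ K * (D * SumW (k + 1)
          (fun g => eLpNorm (fun x => g (t, x)) (ENNReal.ofReal p) volume) f) := by
          gcongr
          simp only [SumW, Finset.mul_sum]
          exact Finset.sum_le_sum fun m _ => Finset.sum_le_sum fun w _ =>
            segW_average_le k hp t hρ x (GwL_contDiff _ hf)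
  calc ‖f (t, x)‖ₑ = V⁻¹ * (V * ‖f (t, x)‖ₑ) := by
        rw [← mul_assoc, ENNReal.inv_mul_cancel hV0 hVt, one_mul]
    _ ≤ V⁻¹ * (K * (D *
        SumW (k + 1) (fun g => eLpNorm (fun x => g (t, x)) (ENNReal.ofReal p) volume) f)) := by
        gcongr
    _ = _ := by
        rw [hD]
        ring

/-- Klainerman–Sobolev type inequality, part (ii) of Lemma 3.2. -/
theorem klainerman_sobolev_ii (n : ℕ) (hn : 2 ≤ n) (p : ℝ) (hp : 2 ≤ p)
    (s : ℕ) (hs : 0 < s) (hsp : (n : ℝ)/p < s) :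
    ∃ C > (0 : ℝ), ∀ v : STn n → ℝ, ContDiff ℝ ∞ v → SchwartzInX v → ∀ t : ℝ, 0 ≤ t →
      eLpNorm (Set.indicator {x : Spc n | ‖x‖ < (1 + t)/2} (fun x => v (t, x))) ⊤ volume ≤
        ENNReal.ofReal (C * (1 + t) ^ (-(n : ℝ)/p)) *
          SumW s (fun f => eLpNorm (fun x => f (t, x)) (ENNReal.ofReal p) volume) v := by
  obtain ⟨k, rfl⟩ : ∃ k, s = k + 1 := ⟨s - 1, by omega⟩
  have hp1 : 1 ≤ p := by linarith
  push_cast at hsp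
  set K : ℝ≥0∞ := (volume (Metric.ball (0 : Spc n) 1))⁻¹ * (2 * (2 + n : ℝ≥0∞)) ^ (k + 1) *
    avgC n k p with hK
  have hKt : K ≠ ⊤ := by
    refine ENNReal.mul_ne_top (ENNReal.mul_ne_top ?_ ?_) (avgC_ne_top n k hp1 hsp)
    · exact ENNReal.inv_ne_top.2 (Metric.measure_ball_pos volume _ one_pos).ne'
    · exact ENNReal.pow_ne_top (ENNReal.mul_ne_top (by simp) (by simp))
  have h10 : (0 : ℝ) < 10 ^ ((n : ℝ) / p) := by positivity
  refine ⟨(K.toReal + 1) * 10 ^ ((n : ℝ) / p), by positivity, fun v hv _ t ht => ?_⟩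
  rw [eLpNorm_exponent_top]
  refine eLpNormEssSup_le_of_ae_enorm_bound (Filter.Eventually.of_forall fun x => ?_)
  by_cases hx : x ∈ {x : Spc n | ‖x‖ < (1 + t) / 2}
  · rw [Set.indicator_of_mem hx]
    refine (pointwise_bound k hp1 ht hx hv).trans ?_
    rw [← hK]
    clear_value K
    refine mul_le_mul_left ?_ _
    have hsc : ((1 + t) / 10) ^ (-(n : ℝ) / p) =
        10 ^ ((n : ℝ) / p) * (1 + t) ^ (-(n : ℝ) / p) := by
      rw [Real.div_rpow (by linarith) (by norm_num), neg_div,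
        Real.rpow_neg (by norm_num : (0 : ℝ) ≤ 10)]
      field_simp
    rw [hsc, mul_assoc, ENNReal.ofReal_mul (by positivity : 0 ≤ K.toReal + 1)]
    refine mul_le_mul_left ?_ _
    rw [← ENNReal.ofReal_toReal hKt]
    exact ENNReal.ofReal_le_ofReal (by simp)
  · rw [Set.indicator_of_notMem hx]
    simp
end
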